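/- arXiv:1710.07387 — 6 statements merged into one kernel-verified Lean document; each statement's English description precedes it below -/
import Mathlib

section
/- For every real a > -1 and all natural numbers m and n, ∫_0^∞ x^a e^{-x} L_m^a(x) L_n^a(x) dx = (Γ(a+n+1)/n!) · δ_{m,n}. Equivalently, the monic polynomials p_n(x) = (-1)^n n! L_n^a(x) satisfy ∫_0^∞ x^a e^{-x} p_m(x) p_n(x) dx = h_n δ_{m,n} with h_n = n! Γ(a+n+1). -/
/-!
Against the weight `x ^ a * e ^ (-x)` on `(0, ∞)`, the power `x ^ j` integrates to `Γ(j + a + 1)`.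
Since `Γ(k + j + a + 1) / Γ(k + a + 1)` is the rising factorial `(k + a + 1)(k + a + 2)⋯(k + a + j)`,
a monic polynomial in `k` of degree `j`, the moment of `x ^ j * L_n^a` is `Γ(n + a + 1) / n!` times
`∑ k, (-1) ^ k * choose n k * P_j(k)`, i.e. up to sign the `n`-th finite difference of a monic
polynomial of degree `j`. It therefore vanishes for `j < n` and equals `(-1) ^ n * Γ(n + a + 1)` for
`j = n` (`laguerreMoment`). Expanding the polynomial of smaller degree in powers of `x` gives
orthogonality, and on the diagonal only its leading coefficient `(-1) ^ n / n!` contributes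
(`laguerre_integral_of_le`).
-/

open Nat MeasureTheory

/-- The generalized Laguerre polynomial
`L_n^a(x) = Σ_{k=0}^{n} (-1)^k (Γ(n+a+1)/(Γ(k+a+1) (n-k)! k!)) x^k`. -/
noncomputable def laguerreP (a : ℝ) (n : ℕ) (x : ℝ) : ℝ :=
  ∑ k ∈ Finset.range (n + 1),
    (-1 : ℝ) ^ k *
      (Real.Gamma (n + a + 1) / (Real.Gamma (k + a + 1) * (n - k)! * k !)) * x ^ k

lemma gamma_add_nat_eq_ascPochhammer {s : ℝ} (hs : 0 < s) (j : ℕ) :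
    Real.Gamma (s + j) = (ascPochhammer ℝ j).eval s * Real.Gamma s := by
  induction j with
  | zero => simp
  | succ j ih =>
    have h : s + (j : ℝ) ≠ 0 := by positivity
    rw [ascPochhammer_succ_eval, Nat.cast_succ, ← add_assoc, Real.Gamma_add_one h, ih]
    ring

/-- Up to the sign `(-1) ^ n`, the left side is the `n`-th forward difference at `0` of a monic
polynomial of degree `j`. -/
lemma alternating_sum_ascPochhammer (b : ℝ) {j n : ℕ} (hj : j ≤ n) :
    ∑ k ∈ Finset.range (n + 1), (-1 : ℝ) ^ k * n.choose k * (ascPochhammer ℝ j).eval (k + b)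
      = if j = n then (-1 : ℝ) ^ n * n ! else 0 := by
  set P : Polynomial ℝ := (ascPochhammer ℝ j).comp (Polynomial.X + Polynomial.C b) with hP
  have hdeg : P.natDegree = j := by
    rw [hP, Polynomial.natDegree_comp, ascPochhammer_natDegree, Polynomial.natDegree_X_add_C,
      mul_one]
  have hmon : P.Monic := (monic_ascPochhammer ℝ j).comp_X_add_C b
  have hdiff : (fwdDiff (1 : ℝ))^[n] P.eval 0 = if j = n then (n ! : ℝ) else 0 := by
    split_ifs with h
    · have := P.fwdDiff_iter_degree_eq_factorial
      rw [hdeg, h] at this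
      simp [this, hmon.leadingCoeff]
    · rw [Polynomial.fwdDiff_iter_eq_zero_of_degree_lt (by omega)]
      rfl
  rw [fwdDiff_iter_eq_sum_shift] at hdiff
  have hsum : ∑ k ∈ Finset.range (n + 1),
      (-1 : ℝ) ^ k * n.choose k * (ascPochhammer ℝ j).eval (k + b)
      = (-1 : ℝ) ^ n * if j = n then (n ! : ℝ) else 0 := by
    rw [← hdiff, Finset.mul_sum]
    refine Finset.sum_congr rfl fun k hk => ?_
    -- `(-1) ^ k = (-1) ^ n * (-1) ^ (n - k)` because `k ≤ n`
    obtain ⟨d, rfl⟩ := Nat.exists_eq_add_of_le (Finset.mem_range_succ_iff.mp hk)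
    have hd : (-1 : ℝ) ^ d * (-1) ^ d = 1 := by rw [← mul_pow]; simp
    simp only [hP, Polynomial.eval_comp, Polynomial.eval_add, Polynomial.eval_X,
      Polynomial.eval_C, zsmul_eq_mul, nsmul_eq_mul, mul_one, zero_add, Nat.add_sub_cancel_left,
      pow_add]
    push_cast
    linear_combination (-(-1 : ℝ) ^ k * (k + d).choose k *
      (ascPochhammer ℝ j).eval (k + b)) * hd
  rw [hsum]
  split_ifs <;> simp

lemma rpow_mul_exp_mul_pow_eq (a : ℝ) (j : ℕ) {x : ℝ} (hx : x ∈ Set.Ioi (0 : ℝ)) :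
    Real.exp (-x) * x ^ ((j + a + 1) - 1) = x ^ a * Real.exp (-x) * x ^ j := by
  rw [show (j + a + 1 - 1 : ℝ) = a + j by ring, Real.rpow_add hx, Real.rpow_natCast]
  ring

lemma weight_integrableOn {a : ℝ} (ha : -1 < a) (j : ℕ) :
    IntegrableOn (fun x : ℝ => x ^ a * Real.exp (-x) * x ^ j) (Set.Ioi 0) := by
  have hj : (0 : ℝ) ≤ j := j.cast_nonneg
  exact (Real.GammaIntegral_convergent (s := j + a + 1) (by linarith)).congr_fun
    (fun x hx => rpow_mul_exp_mul_pow_eq a j hx) measurableSet_Ioi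

lemma weight_integral {a : ℝ} (ha : -1 < a) (j : ℕ) :
    ∫ x in Set.Ioi (0 : ℝ), x ^ a * Real.exp (-x) * x ^ j = Real.Gamma (j + a + 1) := by
  have hj : (0 : ℝ) ≤ j := j.cast_nonneg
  rw [Real.Gamma_eq_integral (s := j + a + 1) (by linarith)]
  exact setIntegral_congr_fun measurableSet_Ioi
    fun x hx => (rpow_mul_exp_mul_pow_eq a j hx).symm

/-- The coefficient of `x ^ k` in `L_n^a`, for `k ≤ n`. -/
noncomputable def laguerreCoeff (a : ℝ) (n k : ℕ) : ℝ :=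
  (-1 : ℝ) ^ k * (Real.Gamma (n + a + 1) / (Real.Gamma (k + a + 1) * (n - k)! * k !))

lemma weight_mul_pow_mul_laguerreP (a : ℝ) (n j : ℕ) (x : ℝ) :
    x ^ a * Real.exp (-x) * x ^ j * laguerreP a n x
      = ∑ k ∈ Finset.range (n + 1),
          laguerreCoeff a n k * (x ^ a * Real.exp (-x) * x ^ (k + j)) := by
  rw [laguerreP, Finset.mul_sum]
  refine Finset.sum_congr rfl fun k _ => ?_
  rw [laguerreCoeff, pow_add]
  ring

lemma moment_integrableOn {a : ℝ} (ha : -1 < a) (n j : ℕ) :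
    IntegrableOn (fun x : ℝ => x ^ a * Real.exp (-x) * x ^ j * laguerreP a n x) (Set.Ioi 0) := by
  simp only [weight_mul_pow_mul_laguerreP]
  exact integrable_finsetSum _ fun k _ => (weight_integrableOn ha (k + j)).const_mul _

/-- The moments of `L_n^a` up to order `n`: all vanish except the last one. -/
lemma laguerreMoment {a : ℝ} (ha : -1 < a) {n j : ℕ} (hj : j ≤ n) :
    ∫ x in Set.Ioi (0 : ℝ), x ^ a * Real.exp (-x) * x ^ j * laguerreP a n x
      = if j = n then (-1 : ℝ) ^ n * Real.Gamma (n + a + 1) else 0 := by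
  simp only [weight_mul_pow_mul_laguerreP]
  rw [integral_finsetSum _ fun k _ => (weight_integrableOn ha (k + j)).const_mul _]
  have hn : (n ! : ℝ) ≠ 0 := by positivity
  have hterm : ∀ k ∈ Finset.range (n + 1),
      ∫ x in Set.Ioi (0 : ℝ), laguerreCoeff a n k * (x ^ a * Real.exp (-x) * x ^ (k + j))
        = Real.Gamma (n + a + 1) / n ! *
          ((-1 : ℝ) ^ k * n.choose k * (ascPochhammer ℝ j).eval (k + (a + 1))) := by
    intro k hk
    have hpos : (0 : ℝ) < k + (a + 1) := by
      have : (0 : ℝ) ≤ k := k.cast_nonneg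
      linarith
    have hG := (Real.Gamma_pos_of_pos hpos).ne'
    rw [integral_const_mul, weight_integral ha, laguerreCoeff,
      Nat.cast_choose ℝ (Finset.mem_range_succ_iff.mp hk),
      show ((k + j : ℕ) : ℝ) + a + 1 = k + (a + 1) + j by push_cast; ring,
      gamma_add_nat_eq_ascPochhammer hpos, add_assoc (k : ℝ) a 1]
    have h1 : ((n - k)! : ℝ) ≠ 0 := by positivity
    have h2 : (k ! : ℝ) ≠ 0 := by positivity
    field_simp
  rw [Finset.sum_congr rfl hterm, ← Finset.mul_sum, alternating_sum_ascPochhammer _ hj]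
  split_ifs
  · field_simp
  · simp

lemma laguerre_integral_of_le {a : ℝ} (ha : -1 < a) {m n : ℕ} (hmn : m ≤ n) :
    ∫ x in Set.Ioi (0 : ℝ), x ^ a * Real.exp (-x) * laguerreP a m x * laguerreP a n x
      = Real.Gamma (a + n + 1) / n ! * (if m = n then 1 else 0) := by
  have hexp : ∀ x : ℝ, x ^ a * Real.exp (-x) * laguerreP a m x * laguerreP a n x
      = ∑ j ∈ Finset.range (m + 1),
          laguerreCoeff a m j * (x ^ a * Real.exp (-x) * x ^ j * laguerreP a n x) := by
    intro x
    rw [laguerreP, Finset.mul_sum, Finset.sum_mul]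
    refine Finset.sum_congr rfl fun j _ => ?_
    rw [laguerreCoeff]
    ring
  simp only [hexp]
  rw [integral_finsetSum _ fun j _ => (moment_integrableOn ha n j).const_mul _]
  have hterm : ∀ j ∈ Finset.range (m + 1),
      ∫ x in Set.Ioi (0 : ℝ),
          laguerreCoeff a m j * (x ^ a * Real.exp (-x) * x ^ j * laguerreP a n x)
        = if j = n then laguerreCoeff a m j * ((-1 : ℝ) ^ n * Real.Gamma (n + a + 1)) else 0 := by
    intro j hj
    rw [integral_const_mul, laguerreMoment ha ((Finset.mem_range_succ_iff.mp hj).trans hmn),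
      mul_ite, mul_zero]
  rw [Finset.sum_congr rfl hterm, Finset.sum_ite_eq']
  by_cases h : m = n
  · subst h
    have hpos : (0 : ℝ) < m + a + 1 := by
      have : (0 : ℝ) ≤ m := m.cast_nonneg
      linarith
    have hG := (Real.Gamma_pos_of_pos hpos).ne'
    have hs : (-1 : ℝ) ^ m * (-1) ^ m = 1 := by rw [← mul_pow]; simp
    have hc : laguerreCoeff a m m = (-1 : ℝ) ^ m / m ! := by
      rw [laguerreCoeff, Nat.sub_self, Nat.factorial_zero]
      field_simp
      simp
    rw [if_pos (by simp), if_pos rfl, hc, add_comm a (m : ℝ)]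
    linear_combination (Real.Gamma (m + a + 1) / m !) * hs
  · rw [if_neg (by rw [Finset.mem_range]; omega), if_neg h, mul_zero]

lemma laguerre_integral {a : ℝ} (ha : -1 < a) (m n : ℕ) :
    ∫ x in Set.Ioi (0 : ℝ), x ^ a * Real.exp (-x) * laguerreP a m x * laguerreP a n x
      = Real.Gamma (a + n + 1) / n ! * (if m = n then 1 else 0) := by
  rcases le_total m n with h | h
  · exact laguerre_integral_of_le ha h
  · simp only [mul_right_comm _ (laguerreP a m _) (laguerreP a n _)]
    rw [laguerre_integral_of_le ha h]
    by_cases hmn : m = n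
    · rw [hmn]
    · simp [hmn, Ne.symm hmn]

/-- Orthogonality of the generalized Laguerre polynomials: for `a > -1`,
`∫_0^∞ x^a e^{-x} L_m^a(x) L_n^a(x) dx = (Γ(a+n+1)/n!) δ_{m,n}`; equivalently, the monic
polynomials `p_n = (-1)^n n! L_n^a` satisfy `∫_0^∞ x^a e^{-x} p_m p_n = h_n δ_{m,n}` with
`h_n = n! Γ(a+n+1)`. -/
theorem laguerre_orthogonality (a : ℝ) (ha : -1 < a) (m n : ℕ) :
    (∫ x in Set.Ioi (0:ℝ), x ^ a * Real.exp (-x) * laguerreP a m x * laguerreP a n x)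
      = Real.Gamma (a + n + 1) / n ! * (if m = n then 1 else 0) ∧
    (∫ x in Set.Ioi (0:ℝ), x ^ a * Real.exp (-x) *
        ((-1 : ℝ) ^ m * m ! * laguerreP a m x) * ((-1 : ℝ) ^ n * n ! * laguerreP a n x))
      = (n ! * Real.Gamma (a + n + 1)) * (if m = n then 1 else 0) := by
  refine ⟨laguerre_integral ha m n, ?_⟩
  have hscale : ∀ x : ℝ, x ^ a * Real.exp (-x) * ((-1 : ℝ) ^ m * m ! * laguerreP a m x) *
        ((-1 : ℝ) ^ n * n ! * laguerreP a n x)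
      = ((-1 : ℝ) ^ m * m ! * ((-1 : ℝ) ^ n * n !)) *
        (x ^ a * Real.exp (-x) * laguerreP a m x * laguerreP a n x) := fun x => by ring
  simp only [hscale]
  rw [integral_const_mul, laguerre_integral ha m n]
  by_cases h : m = n
  · subst h
    have hs : (-1 : ℝ) ^ m * (-1) ^ m = 1 := by rw [← mul_pow]; simp
    have hm : (m ! : ℝ) ≠ 0 := by positivity
    rw [if_pos rfl]
    field_simp
    linear_combination Real.Gamma (a + m + 1) * hs
  · simp [h]
end

section
/- Determinantal formula for GUE correlation functions: let N ≥ 1 and 1 ≤ k ≤ N. Set Z_N = ∫_{ℝ^N} Π_{l=1}^{N} e^{-x_l²} Π_{1≤i<j≤N} (x_j - x_i)² dx_1⋯dx_N (which is strictly positive). Then for all real x_1, …, x_k, (N!/(N-k)!) · (1/Z_N) · ∫_{ℝ^{N-k}} Π_{l=1}^{N} e^{-x_l²} Π_{1≤i<j≤N} (x_j - x_i)² dx_{k+1}⋯dx_N = det[ K_N^G(x_i, x_j) ]_{i,j=1,…,k}. -/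
/-!
With the normalised Hermite functions `φ_n(x) = e^{-x²/2} H_n(x) / √(√π 2ⁿ n!)`, the kernel is
`K_N(x,y) = ∑_{n<N} φ_n(x) φ_n(y)`, and the Vandermonde determinant in the density may be computed
with the monic polynomials `2⁻ⁿ H_n` in place of the powers. Hence the density on `ℝ^N` is a positive
multiple of `det[φ_j(x_i)]² = det[K_N(x_i,x_j)]` (`exists_gueWeight_eq`).

Integration by parts against `e^{-x²}` shows that the `φ_n` are orthonormal
(`integral_hermiteFun_mul`), so `K_N` is a reproducing kernel with `∫ K_N(y,y) dy = N`. Expanding the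
`(n+1)`-point determinant along the border belonging to the last point
(`det_bordered`: `d det A - v adj(A) u`) and integrating that point out gives
`N det A - tr(adj(A) A) = (N - n) det A`, where `A` is the `n`-point matrix
(`integral_kernelDet_unit`). Iterating over `m = N - k` points produces the factor `m!`
(`integral_kernelDet`). For `k = 0` this evaluates `Z_N`, up to the same multiple, as `N!`; taking
the quotient gives the formula.

Determinants are indexed by arbitrary finite types, so that a newly integrated point can be
adjoined as a summand `Unit`. Since they are nonnegative, the iteration is carried out with
Lebesgue integrals.
-/

open Nat MeasureTheory

/-- The physicists' Hermite polynomials: `H 0 x = 1`, `H 1 x = 2x`,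
`H (n+1) x = 2x * H n x - 2n * H (n-1) x`. -/
noncomputable def hermiteP : ℕ → ℝ → ℝ
  | 0, _ => 1
  | 1, x => 2 * x
  | (n + 2), x => 2 * x * hermiteP (n + 1) x - 2 * (n + 1) * hermiteP n x

/-- The GUE correlation kernel `K_N^G(x,y) = e^{-(x²+y²)/2} Σ_{n<N} H_n(x)H_n(y)/(√π 2^n n!)`. -/
noncomputable def gueKernel (N : ℕ) (x y : ℝ) : ℝ :=
  Real.exp (-(x ^ 2 + y ^ 2) / 2) *
    ∑ n ∈ Finset.range N, hermiteP n x * hermiteP n y / (Real.sqrt Real.pi * 2 ^ n * n !)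

/-- The unnormalised GUE eigenvalue density
`Π_l e^{-x_l²} Π_{i<j} (x_j - x_i)²` on `ℝ^n`. -/
noncomputable def gueWeight (n : ℕ) (x : Fin n → ℝ) : ℝ :=
  (∏ l, Real.exp (-(x l) ^ 2)) *
    ∏ p ∈ Finset.univ.filter (fun p : Fin n × Fin n => p.1 < p.2), (x p.2 - x p.1) ^ 2

/-- The GUE normalisation `Z_N = ∫_{ℝ^N} Π_l e^{-x_l²} Π_{i<j}(x_j-x_i)² dx`. -/
noncomputable def gueZ (n : ℕ) : ℝ := ∫ x : Fin n → ℝ, gueWeight n x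

/-! ### Orthogonality of the Hermite functions -/

open Polynomial in
/-- The monic rescaling `2⁻ⁿ Hₙ` of the Hermite polynomial, as a polynomial. -/
noncomputable def monicHermite : ℕ → ℝ[X]
  | 0 => 1
  | 1 => X
  | (n + 2) => X * monicHermite (n + 1) - C (((n : ℝ) + 1) / 2) * monicHermite n

theorem hermiteP_eq (n : ℕ) (x : ℝ) : hermiteP n x = 2 ^ n * (monicHermite n).eval x := by
  induction n using Nat.twoStepInduction with
  | zero => simp [hermiteP, monicHermite]
  | one => simp [hermiteP, monicHermite]
  | more n h0 h1 =>
    simp only [hermiteP, monicHermite, h0, h1, Polynomial.eval_sub, Polynomial.eval_mul,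
      Polynomial.eval_X, Polynomial.eval_C]
    ring

theorem monicHermite_monic_and_degree (n : ℕ) :
    (monicHermite n).Monic ∧ (monicHermite n).degree = n := by
  induction n using Nat.twoStepInduction with
  | zero => simp [monicHermite]
  | one => simp [monicHermite, Polynomial.monic_X]
  | more n h0 h1 =>
    have hX : (Polynomial.X * monicHermite (n + 1)).degree = ((n + 2 : ℕ) : WithBot ℕ) := by
      rw [Polynomial.degree_mul, h1.2, Polynomial.degree_X]
      norm_cast
      omega
    have hlt : (Polynomial.C (((n : ℝ) + 1) / 2) * monicHermite n).degree
        < (Polynomial.X * monicHermite (n + 1)).degree := by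
      have hc : ((n : ℝ) + 1) / 2 ≠ 0 := by positivity
      rw [hX, Polynomial.degree_mul, h0.2, Polynomial.degree_C hc, zero_add]
      norm_cast
      omega
    refine ⟨(Polynomial.monic_X.mul h1.1).sub_of_left hlt, ?_⟩
    rw [monicHermite, Polynomial.degree_sub_eq_left_of_degree_lt hlt, hX]

theorem derivative_monicHermite_succ (n : ℕ) :
    (monicHermite (n + 1)).derivative = Polynomial.C ((n : ℝ) + 1) * monicHermite n := by
  induction n using Nat.twoStepInduction with
  | zero => simp [monicHermite]
  | one =>
    simp only [monicHermite, Polynomial.derivative_sub, Polynomial.derivative_mul,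
      Polynomial.derivative_X, Polynomial.derivative_C, Polynomial.derivative_one]
    apply Polynomial.funext
    intro x
    simp
    norm_num
    ring
  | more n h0 h1 =>
    rw [monicHermite, Polynomial.derivative_sub, Polynomial.derivative_mul,
      Polynomial.derivative_C_mul, h1, h0, Polynomial.derivative_X]
    apply Polynomial.funext
    intro x
    have h : (monicHermite (n + 2)).eval x = x * (monicHermite (n + 1)).eval x
        - ((n : ℝ) + 1) / 2 * (monicHermite n).eval x := by
      simp [monicHermite]
    simp only [Polynomial.eval_sub, Polynomial.eval_add, Polynomial.eval_mul, Polynomial.eval_C,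
      Polynomial.eval_X, Polynomial.eval_one, h]
    push_cast
    ring

/-- The raising relation `Pₙ₊₁ = x Pₙ - Pₙ' / 2`, which says that
`(Pₙ e^{-x²})' = -2 Pₙ₊₁ e^{-x²}`. -/
theorem monicHermite_succ (n : ℕ) (x : ℝ) :
    (monicHermite (n + 1)).eval x
      = x * (monicHermite n).eval x - (monicHermite n).derivative.eval x / 2 := by
  cases n with
  | zero => simp [monicHermite]
  | succ n =>
    rw [derivative_monicHermite_succ]
    simp [monicHermite]
    ring

theorem integrable_poly_mul_gaussian (p : Polynomial ℝ) :
    Integrable fun x : ℝ => p.eval x * Real.exp (-x ^ 2) := by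
  induction p using Polynomial.induction_on' with
  | add p q hp hq =>
    simp only [Polynomial.eval_add, add_mul]
    exact hp.add hq
  | monomial n a =>
    have h := (integrable_rpow_mul_exp_neg_mul_sq (b := 1) one_pos (s := n)
      (by linarith [n.cast_nonneg (α := ℝ)])).const_mul a
    simpa [mul_assoc] using h

theorem integral_mul_monicHermite_succ (p : Polynomial ℝ) (n : ℕ) :
    ∫ x : ℝ, (p * monicHermite (n + 1)).eval x * Real.exp (-x ^ 2)
      = (∫ x : ℝ, (p.derivative * monicHermite n).eval x * Real.exp (-x ^ 2)) / 2 := by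
  have hd : ∀ x : ℝ, HasDerivAt
      (fun x : ℝ => (p * monicHermite n).eval x * Real.exp (-x ^ 2))
      ((p.derivative * monicHermite n).eval x * Real.exp (-x ^ 2)
        - 2 * ((p * monicHermite (n + 1)).eval x * Real.exp (-x ^ 2))) x := by
    intro x
    have h1 := (p * monicHermite n).hasDerivAt x
    have h2 : HasDerivAt (fun x : ℝ => Real.exp (-x ^ 2))
        (Real.exp (-x ^ 2) * (-(2 * x))) x := by
      simpa using ((hasDerivAt_pow 2 x).neg).exp
    refine (h1.mul h2).congr_deriv ?_
    rw [Polynomial.eval_mul (p := p) (q := monicHermite (n + 1)), monicHermite_succ, Polynomial.derivative_mul]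
    simp only [Polynomial.eval_mul, Polynomial.eval_add]
    ring
  have hi1 := integrable_poly_mul_gaussian (p.derivative * monicHermite n)
  have hi2 := (integrable_poly_mul_gaussian (p * monicHermite (n + 1))).const_mul 2
  have h := integral_eq_zero_of_hasDerivAt_of_integrable hd (hi1.sub hi2)
    (integrable_poly_mul_gaussian _)
  rw [integral_sub hi1 hi2, integral_const_mul] at h
  linarith

theorem integral_monicHermite_mul (a b : ℕ) :
    ∫ x : ℝ, (monicHermite a * monicHermite b).eval x * Real.exp (-x ^ 2)
      = if a = b then √Real.pi * a ! / 2 ^ a else 0 := by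
  induction a generalizing b with
  | zero =>
    cases b with
    | zero =>
      have := integral_gaussian 1
      simpa [monicHermite] using this
    | succ b => rw [integral_mul_monicHermite_succ]; simp [monicHermite]
  | succ a ih =>
    cases b with
    | zero => rw [mul_comm, integral_mul_monicHermite_succ]; simp [monicHermite]
    | succ b =>
      rw [integral_mul_monicHermite_succ, derivative_monicHermite_succ]
      simp_rw [mul_assoc (Polynomial.C _), Polynomial.eval_mul (p := Polynomial.C _),
        Polynomial.eval_C, mul_assoc ((a : ℝ) + 1)]
      rw [integral_const_mul, ih]
      by_cases h : a = b
      · simp [h, Nat.factorial_succ, pow_succ]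
        field_simp
      · simp [h]

/-- The normalised Hermite function `e^{-x²/2} Hₙ(x) / √(√π 2ⁿ n!)`. -/
noncomputable def hermiteFun (n : ℕ) (x : ℝ) : ℝ :=
  Real.exp (-x ^ 2 / 2) * hermiteP n x / √(√Real.pi * 2 ^ n * n !)

theorem gueKernel_eq (N : ℕ) (x y : ℝ) :
    gueKernel N x y = ∑ n : Fin N, hermiteFun n x * hermiteFun n y := by
  rw [gueKernel, Finset.mul_sum, Finset.sum_range]
  refine Finset.sum_congr rfl fun n _ => ?_
  have h : (0 : ℝ) < √Real.pi * 2 ^ (n : ℕ) * (n : ℕ)! := by positivity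
  rw [hermiteFun, hermiteFun, _root_.div_mul_div_comm, Real.mul_self_sqrt h.le,
    show -(x ^ 2 + y ^ 2) / 2 = -x ^ 2 / 2 + -y ^ 2 / 2 by ring, Real.exp_add]
  ring

theorem hermiteFun_mul (a b : ℕ) (x : ℝ) :
    hermiteFun a x * hermiteFun b x
      = 2 ^ a * 2 ^ b / (√(√Real.pi * 2 ^ a * a !) * √(√Real.pi * 2 ^ b * b !))
        * ((monicHermite a * monicHermite b).eval x * Real.exp (-x ^ 2)) := by
  rw [hermiteFun, hermiteFun, hermiteP_eq, hermiteP_eq, Polynomial.eval_mul,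
    show -x ^ 2 = -x ^ 2 / 2 + -x ^ 2 / 2 by ring, Real.exp_add]
  ring_nf

theorem integrable_hermiteFun_mul (a b : ℕ) :
    Integrable fun x => hermiteFun a x * hermiteFun b x := by
  simp_rw [hermiteFun_mul]
  exact (integrable_poly_mul_gaussian _).const_mul _

theorem integral_hermiteFun_mul (a b : ℕ) :
    ∫ x, hermiteFun a x * hermiteFun b x = if a = b then 1 else 0 := by
  simp_rw [hermiteFun_mul]
  rw [integral_const_mul, integral_monicHermite_mul]
  split_ifs with h
  · subst h
    have h : (0 : ℝ) < √Real.pi * 2 ^ a * a ! := by positivity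
    rw [Real.mul_self_sqrt h.le]
    field_simp
  · simp

theorem continuous_hermiteFun (n : ℕ) : Continuous (hermiteFun n) := by
  unfold hermiteFun
  simp_rw [hermiteP_eq]
  fun_prop

/-! ### The correlation kernel as a projection -/

theorem continuous_gueKernel (N : ℕ) : Continuous fun p : ℝ × ℝ => gueKernel N p.1 p.2 := by
  simp_rw [gueKernel_eq]
  exact continuous_finsetSum _ fun n _ =>
    ((continuous_hermiteFun n).comp continuous_fst).mul ((continuous_hermiteFun n).comp continuous_snd)

theorem gueKernel_self (N : ℕ) :
    Integrable (fun y => gueKernel N y y) ∧ ∫ y, gueKernel N y y = N := by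
  simp_rw [gueKernel_eq]
  refine ⟨integrable_finsetSum _ fun n _ => integrable_hermiteFun_mul n n, ?_⟩
  rw [integral_finsetSum _ fun (n : Fin N) _ => integrable_hermiteFun_mul n n]
  simp [integral_hermiteFun_mul]

theorem gueKernel_reproducing (N : ℕ) (x z : ℝ) :
    Integrable (fun y => gueKernel N x y * gueKernel N y z) ∧
      ∫ y, gueKernel N x y * gueKernel N y z = gueKernel N x z := by
  have h : ∀ y, gueKernel N x y * gueKernel N y z = ∑ a : Fin N, ∑ b : Fin N,
      hermiteFun a x * hermiteFun b z * (hermiteFun a y * hermiteFun b y) := by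
    intro y
    rw [gueKernel_eq, gueKernel_eq, Finset.sum_mul_sum]
    exact Finset.sum_congr rfl fun a _ => Finset.sum_congr rfl fun b _ => by ring
  have hi : ∀ a b : Fin N, Integrable fun y =>
      hermiteFun a x * hermiteFun b z * (hermiteFun a y * hermiteFun b y) :=
    fun a b => (integrable_hermiteFun_mul a b).const_mul _
  simp_rw [h]
  refine ⟨integrable_finsetSum _ fun a _ => integrable_finsetSum _ fun b _ => hi a b, ?_⟩
  rw [integral_finsetSum _ fun a _ => integrable_finsetSum _ fun b _ => hi a b]
  simp_rw [integral_finsetSum _ fun b _ => hi _ b, integral_const_mul, integral_hermiteFun_mul,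
    Fin.val_inj, gueKernel_eq]
  simp

/-! ### Integrating out one variable -/

/-- Expansion of a bordered determinant in terms of the adjugate. For an invertible block `A` this is
the Schur complement formula; the general case follows by density of the `t` with
`A + t` invertible. -/
theorem det_bordered {ι : Type*} [Fintype ι] [DecidableEq ι] (A : Matrix ι ι ℝ)
    (u v : ι → ℝ) (d : ℝ) :
    (Matrix.fromBlocks A (Matrix.of fun i (_ : Unit) => u i) (Matrix.of fun (_ : Unit) j => v j)
      (Matrix.of fun (_ _ : Unit) => d)).det
      = d * A.det - ∑ i, ∑ j, A.adjugate i j * (v i * u j) := by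
  have hinv : ∀ B : Matrix ι ι ℝ, B.det ≠ 0 →
      (Matrix.fromBlocks B (Matrix.of fun i (_ : Unit) => u i)
        (Matrix.of fun (_ : Unit) j => v j) (Matrix.of fun (_ _ : Unit) => d)).det
      = d * B.det - ∑ i, ∑ j, B.adjugate i j * (v i * u j) := by
    intro B hB
    let _ := B.invertibleOfIsUnitDet (isUnit_iff_ne_zero.mpr hB)
    rw [Matrix.det_fromBlocks₁₁, Matrix.det_unique (n := Unit), Matrix.sub_apply, mul_sub,
      Matrix.mul_assoc, Matrix.mul_apply]
    simp_rw [Matrix.mul_apply, Matrix.invOf_eq_nonsing_inv, Matrix.inv_def, Ring.inverse_eq_inv']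
    congr 1
    · simp [mul_comm]
    · simp only [Matrix.of_apply, Matrix.smul_apply, smul_eq_mul, Finset.mul_sum]
      refine Finset.sum_congr rfl fun i _ => Finset.sum_congr rfl fun j _ => ?_
      field_simp
  have hdense : Dense {t : ℝ | (A + t • (1 : Matrix ι ι ℝ)).det ≠ 0} := by
    have hfin : {t : ℝ | (A + t • (1 : Matrix ι ι ℝ)).det = 0}.Finite := by
      refine ((-A).charpoly.roots.toFinset.finite_toSet).subset fun t ht => ?_
      have h := Matrix.eval_charpoly (-A) t
      have hs : Matrix.scalar ι t - -A = A + t • (1 : Matrix ι ι ℝ) := by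
        rw [sub_neg_eq_add, add_comm, Matrix.smul_one_eq_diagonal]; rfl
      rw [hs, show (A + t • (1 : Matrix ι ι ℝ)).det = 0 from ht] at h
      simpa [Polynomial.mem_roots, (Matrix.charpoly_monic (-A)).ne_zero] using h
    exact hfin.countable.dense_compl ℝ
  have hcA : Continuous fun t : ℝ => A + t • (1 : Matrix ι ι ℝ) := by fun_prop
  have key := Continuous.ext_on hdense
    (f := fun t : ℝ => (Matrix.fromBlocks (A + t • (1 : Matrix ι ι ℝ))
      (Matrix.of fun i (_ : Unit) => u i) (Matrix.of fun (_ : Unit) j => v j)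
      (Matrix.of fun (_ _ : Unit) => d)).det)
    (g := fun t : ℝ => d * (A + t • (1 : Matrix ι ι ℝ)).det
      - ∑ i, ∑ j, (A + t • (1 : Matrix ι ι ℝ)).adjugate i j * (v i * u j))
    (Continuous.matrix_det (hcA.matrix_fromBlocks continuous_const continuous_const
      continuous_const))
    ((continuous_const.mul hcA.matrix_det).sub
      (continuous_finsetSum _ fun i _ => continuous_finsetSum _ fun j _ =>
        (hcA.matrix_adjugate.matrix_elem i j).mul continuous_const))
    (fun t ht => hinv _ ht)
  simpa using congrFun key 0

/-- The determinant `det[K_N(x_i, x_j)]` for points indexed by an arbitrary finite type. -/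
noncomputable def kernelDet {ι : Type*} [Fintype ι] [DecidableEq ι] (N : ℕ) (x : ι → ℝ) : ℝ :=
  (Matrix.of fun i j => gueKernel N (x i) (x j)).det

section kernelDet

variable {ι κ : Type*} [Fintype ι] [DecidableEq ι] [Fintype κ] [DecidableEq κ]

theorem kernelDet_comp_equiv (N : ℕ) (e : κ ≃ ι) (x : ι → ℝ) :
    kernelDet N (x ∘ e) = kernelDet N x :=
  Matrix.det_submatrix_equiv_self e (Matrix.of fun i j => gueKernel N (x i) (x j))

theorem continuous_kernelDet (N : ℕ) : Continuous (kernelDet N : (ι → ℝ) → ℝ) := by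
  refine Continuous.matrix_det (continuous_matrix fun i j => ?_)
  exact (continuous_gueKernel N).comp (f := fun x : ι → ℝ => (x i, x j))
    ((continuous_apply i).prodMk (continuous_apply j))

/-- `K_N` is a Gram kernel, so its determinants are nonnegative. -/
theorem kernelDet_nonneg (N : ℕ) (x : ι → ℝ) : 0 ≤ kernelDet N x := by
  have h : (Matrix.of fun i j => gueKernel N (x i) (x j))
      = (Matrix.of fun i (n : Fin N) => hermiteFun n (x i))
        * (Matrix.of fun i (n : Fin N) => hermiteFun n (x i)).conjTranspose := by
    ext i j
    simp [Matrix.mul_apply, gueKernel_eq]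
  rw [kernelDet, h]
  exact (Matrix.posSemidef_self_mul_conjTranspose _).det_nonneg

theorem kernelDet_sumElim_unit (N : ℕ) (x : ι → ℝ) (y : ℝ) :
    kernelDet N (Sum.elim x fun _ : Unit => y)
      = gueKernel N y y * kernelDet N x
        - ∑ i, ∑ j, (Matrix.of fun i j => gueKernel N (x i) (x j)).adjugate i j
          * (gueKernel N y (x i) * gueKernel N (x j) y) := by
  rw [kernelDet, kernelDet, ← det_bordered]
  congr 1
  ext (i | i) (j | j) <;> rfl

/-- Dyson's integration lemma: since `∫ K(y,y) dy = N` and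
`∫ K(x_j,y) K(y,x_i) dy = K(x_j,x_i)`, the two terms of the bordered expansion integrate to
`N det A` and `tr(adj(A) A) = n det A`. -/
theorem integral_kernelDet_unit (N : ℕ) (x : ι → ℝ) :
    Integrable (fun y => kernelDet N (Sum.elim x fun _ : Unit => y)) ∧
      ∫ y, kernelDet N (Sum.elim x fun _ : Unit => y)
        = (N - Fintype.card ι) * kernelDet N x := by
  set A : Matrix ι ι ℝ := Matrix.of fun i j => gueKernel N (x i) (x j) with hA
  have h1 : Integrable fun y => gueKernel N y y * kernelDet N x :=
    (gueKernel_self N).1.mul_const _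
  have h2 : ∀ i j, Integrable fun y =>
      A.adjugate i j * (gueKernel N y (x i) * gueKernel N (x j) y) := fun i j => by
    simp_rw [mul_comm (gueKernel N _ (x i))]
    exact (gueKernel_reproducing N _ _).1.const_mul _
  have h3 : ∀ i j, ∫ y, A.adjugate i j * (gueKernel N y (x i) * gueKernel N (x j) y)
      = A.adjugate i j * A j i := fun i j => by
    simp_rw [mul_comm (gueKernel N _ (x i))]
    rw [integral_const_mul, (gueKernel_reproducing N _ _).2]
    rfl
  have h4 : Integrable fun y => ∑ i, ∑ j,
      A.adjugate i j * (gueKernel N y (x i) * gueKernel N (x j) y) :=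
    integrable_finsetSum _ fun i _ => integrable_finsetSum _ fun j _ => h2 i j
  simp_rw [kernelDet_sumElim_unit, ← hA]
  refine ⟨h1.sub h4, ?_⟩
  rw [integral_sub h1 h4, integral_mul_const, (gueKernel_self N).2,
    integral_finsetSum _ fun i _ => integrable_finsetSum _ fun j _ => h2 i j]
  simp_rw [integral_finsetSum _ fun j _ => h2 _ j, h3, ← Matrix.mul_apply, Matrix.adjugate_mul]
  simp [kernelDet, ← hA]
  ring

end kernelDet

/-! ### Integrating out several variables -/

/-- Iterated Dyson lemma. Working with the Lebesgue integral of a nonnegative function lets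
Tonelli's theorem apply without integrability on the product space. -/
theorem lintegral_kernelDet (N m : ℕ) :
    ∀ {ι : Type} [Fintype ι] [DecidableEq ι] (x : ι → ℝ), Fintype.card ι + m = N →
      ∫⁻ y : Fin m → ℝ, ENNReal.ofReal (kernelDet N (Sum.elim x y))
        = ENNReal.ofReal (m ! * kernelDet N x) := by
  induction m with
  | zero =>
    intro ι _ _ x _
    have h : ∀ y : Fin 0 → ℝ, kernelDet N (Sum.elim x y) = kernelDet N x := fun y => by
      rw [← kernelDet_comp_equiv N (Equiv.sumEmpty ι (Fin 0)).symm]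
      rfl
    simp [h, volume_pi]
  | succ m ih =>
    intro ι _ _ x hN
    -- Move the first integration variable into the list of fixed points.
    have hmove : ∀ (t : ℝ) (y : Fin m → ℝ),
        kernelDet N (Sum.elim x (Fin.cons t y : Fin (m + 1) → ℝ))
          = kernelDet N (Sum.elim (Sum.elim x fun _ : Unit => t) y) := fun t y => by
      let e : (ι ⊕ Unit) ⊕ Fin m ≃ ι ⊕ Fin (m + 1) :=
        (Equiv.sumAssoc ι Unit (Fin m)).trans
          ((Equiv.refl ι).sumCongr ((Equiv.sumComm Unit (Fin m)).trans
            ((finSuccEquiv m).trans (Equiv.optionEquivSumPUnit (Fin m))).symm))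
      rw [← kernelDet_comp_equiv N e]
      congr 1
      ext ((i | i) | i) <;> simp [e]
    have hcont : Continuous fun y : Fin (m + 1) → ℝ => kernelDet N (Sum.elim x y) := by
      refine (continuous_kernelDet N).comp (continuous_pi ?_)
      rintro (i | i)
      · exact continuous_const
      · exact continuous_apply i
    have hcons := (volume_preserving_piFinSuccAbove (fun _ : Fin (m + 1) => ℝ) 0).symm
    have hmeas : Measurable fun p : ℝ × (Fin m → ℝ) => ENNReal.ofReal (kernelDet N
        (Sum.elim x ((MeasurableEquiv.piFinSuccAbove (fun _ : Fin (m + 1) => ℝ) 0).symm p))) :=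
      ENNReal.measurable_ofReal.comp (hcont.measurable.comp (MeasurableEquiv.measurable _))
    have hcard : Fintype.card (ι ⊕ Unit) + m = N := by
      rw [Fintype.card_sum, Fintype.card_unit]; omega
    have hone := integral_kernelDet_unit N x
    rw [← hcons.lintegral_comp_emb (MeasurableEquiv.measurableEmbedding _), Measure.volume_eq_prod,
      lintegral_prod _ hmeas.aemeasurable]
    have hsymm : ∀ (t : ℝ) (y : Fin m → ℝ),
        (MeasurableEquiv.piFinSuccAbove (fun _ : Fin (m + 1) => ℝ) 0).symm (t, y)
          = (Fin.cons t y : Fin (m + 1) → ℝ) := fun t y => Fin.insertNth_zero' t y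
    simp_rw [hsymm, hmove, ih _ hcard]
    rw [← ofReal_integral_eq_lintegral_ofReal (hone.1.const_mul _)
      (Filter.Eventually.of_forall fun y => mul_nonneg (by positivity) (kernelDet_nonneg _ _)),
      integral_const_mul, hone.2, ← hN, Nat.factorial_succ]
    push_cast
    ring_nf

theorem integral_kernelDet (N k m : ℕ) (hN : k + m = N) (x : Fin k → ℝ) :
    ∫ y : Fin m → ℝ, kernelDet N (Fin.append x y) = m ! * kernelDet N x := by
  have h : ∀ y : Fin m → ℝ, kernelDet N (Fin.append x y)
      = kernelDet N (Sum.elim x y) := fun y => by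
    rw [← kernelDet_comp_equiv _ finSumFinEquiv]
    congr 1
    ext (i | i) <;> simp
  have hcont : Continuous fun y : Fin m → ℝ => kernelDet N (Sum.elim x y) := by
    refine (continuous_kernelDet _).comp (continuous_pi ?_)
    rintro (i | i)
    · exact continuous_const
    · exact continuous_apply i
  simp_rw [h]
  rw [integral_eq_lintegral_of_nonneg_ae
    (Filter.Eventually.of_forall fun y => kernelDet_nonneg _ _) hcont.aestronglyMeasurable,
    lintegral_kernelDet _ _ _ (by simpa using hN),
    ENNReal.toReal_ofReal (mul_nonneg (by positivity) (kernelDet_nonneg _ _))]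

/-! ### The density as a determinant -/

theorem prod_sq_eq_vandermonde (n : ℕ) (x : Fin n → ℝ) :
    ∏ p ∈ Finset.univ.filter (fun p : Fin n × Fin n => p.1 < p.2), (x p.2 - x p.1) ^ 2
      = (Matrix.vandermonde x).det ^ 2 := by
  rw [Matrix.det_vandermonde, Finset.prod_pow]
  congr 1
  rw [Finset.prod_filter, Fintype.prod_prod_type]
  refine Finset.prod_congr rfl fun i _ => ?_
  rw [← Finset.prod_filter]
  exact Finset.prod_congr (by ext; simp) fun _ _ => rfl

theorem det_hermiteFun (n : ℕ) (x : Fin n → ℝ) :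
    (Matrix.of fun i j : Fin n => hermiteFun j (x i)).det
      = (∏ i, Real.exp (-x i ^ 2 / 2)) *
        ((∏ j : Fin n, 2 ^ (j : ℕ) / √(√Real.pi * 2 ^ (j : ℕ) * (j : ℕ)!))
          * (Matrix.vandermonde x).det) := by
  rw [Matrix.det_eval_matrixOfPolynomials_eq_det_vandermonde x (fun j => monicHermite j)
    (fun j => Polynomial.natDegree_eq_of_degree_eq_some (monicHermite_monic_and_degree j).2)
    (fun j => (monicHermite_monic_and_degree j).1), ← Matrix.det_mul_row, ← Matrix.det_mul_column]
  congr 1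
  ext i j
  simp only [Matrix.of_apply, hermiteFun, hermiteP_eq]
  ring

/-- The density is a positive multiple of `det[K_n(x_i, x_j)]`, namely of the square of
`det[φ_j(x_i)]`. -/
theorem exists_gueWeight_eq (n : ℕ) :
    ∃ c : ℝ, 0 < c ∧ ∀ x : Fin n → ℝ, gueWeight n x = c * kernelDet n x := by
  set b : ℝ := ∏ j : Fin n, 2 ^ (j : ℕ) / √(√Real.pi * 2 ^ (j : ℕ) * (j : ℕ)!) with hb
  have hbpos : 0 < b := Finset.prod_pos fun j _ => by positivity
  refine ⟨(b ^ 2)⁻¹, by positivity, fun x => ?_⟩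
  have h : kernelDet n x = (Matrix.of fun i j : Fin n => hermiteFun j (x i)).det ^ 2 := by
    rw [sq]
    nth_rewrite 2 [← Matrix.det_transpose]
    rw [← Matrix.det_mul, kernelDet]
    congr 1
    ext i j
    simp [Matrix.mul_apply, gueKernel_eq]
  have he : ∏ i, Real.exp (-x i ^ 2) = (∏ i, Real.exp (-x i ^ 2 / 2)) ^ 2 := by
    rw [← Finset.prod_pow]
    refine Finset.prod_congr rfl fun i _ => ?_
    rw [← Real.exp_nat_mul]
    congr 1
    push_cast
    ring
  rw [h, det_hermiteFun, gueWeight, prod_sq_eq_vandermonde, he, ← hb]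
  field_simp

/-! ### The correlation functions -/

/-- Determinantal formula for the GUE `k`-point correlation functions, stated with
`N = k + m` (so that `1 ≤ k ≤ N`): `Z_N > 0` and
`(N!/(N-k)!) (1/Z_N) ∫_{ℝ^{N-k}} Π_l e^{-x_l²} Π_{i<j}(x_j-x_i)² dx_{k+1}⋯dx_N
  = det[K_N^G(x_i,x_j)]_{i,j=1,…,k}`. -/
theorem gue_correlation_determinantal (k m : ℕ) (hk : 1 ≤ k) (x : Fin k → ℝ) :
    0 < gueZ (k + m) ∧
    ((k + m)! : ℝ) / (m ! : ℝ) * (1 / gueZ (k + m)) *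
        (∫ y : Fin m → ℝ, gueWeight (k + m) (Fin.append x y))
      = Matrix.det (Matrix.of fun i j : Fin k => gueKernel (k + m) (x i) (x j)) := by
  obtain ⟨c, hc, hw⟩ := exists_gueWeight_eq (k + m)
  have hZ : gueZ (k + m) = c * (k + m)! := by
    -- Integrating out all variables leaves the empty determinant `1`.
    have h0 := integral_kernelDet (k + m) 0 (k + m) (Nat.zero_add _) Fin.elim0
    have hempty : kernelDet (k + m) (Fin.elim0 : Fin 0 → ℝ) = 1 := Matrix.det_fin_zero
    have happ : ∀ y : Fin (k + m) → ℝ,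
        kernelDet (k + m) (Fin.append Fin.elim0 y) = kernelDet (k + m) y := fun y => by
      rw [Fin.elim0_append]
      exact kernelDet_comp_equiv (k + m) (finCongr (Nat.zero_add (k + m))) y
    simp_rw [happ, hempty, mul_one] at h0
    simp_rw [gueZ, hw]
    rw [integral_const_mul, h0]
  have hpos : 0 < gueZ (k + m) := by rw [hZ]; positivity
  refine ⟨hpos, ?_⟩
  simp_rw [hw]
  rw [integral_const_mul, integral_kernelDet _ _ _ rfl, hZ]
  change _ = kernelDet (k + m) x
  field_simp
end

section
/- Thinned gap probability identity for the LUE: let a > -1 be real, N ≥ 1, ξ real and s real. Set Z_N = ∫_{(0,∞)^N} Π_{l=1}^{N} x_l^a e^{-x_l} Π_{1≤i<j≤N} (x_j - x_i)² dx (which is strictly positive). Then (1/Z_N) ∫_{(0,∞)^N} Π_{l=1}^{N} (1 - ξ·χ_{x_l > s}) x_l^a e^{-x_l} Π_{1≤i<j≤N} (x_j - x_i)² dx_1⋯dx_N = Σ_{k=0}^{N} ((-ξ)^k / k!) ∫_{((max(s,0),∞))^k} det[ K_N^L(x_i, x_j) ]_{i,j=1,…,k} dx_1⋯dx_k, where the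 k=0 term of the sum equals 1 and χ_{x>s} equals 1 if x > s and 0 otherwise. -/
/-!
Both sides equal `det (1 - ξ M)`, where `M i j = (∫_{x > max s 0} p_i p_j x^a e^{-x} dx) / h_j` is
the overlap matrix (`lagOverlap`) of the monic Laguerre polynomials `p_n = (-1)^n n! L_n^a`, with
squared norms `h_n = n! Γ(n+a+1)`.

On the left, the squared Vandermonde product is `det (p_i(x_j))²`, so Andréief's identity
(`integral_det_mul_det`) and the orthogonality relation (`integral_lagPoly_mul_lagPoly`) turn the
integral into `N! (∏ h_n) det (1 - ξ M)` (`integral_thinned_eq`). Taking `ξ = 0` shows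
`Z_N = N! ∏ h_n > 0`. Orthogonality itself holds because `∫ x^j p_n x^a e^{-x} dx` is a multiple of
the `n`-th finite difference of a monic polynomial of degree `j`.

On the right, the kernel is `∑ p_n(x) p_n(y) / h_n` times square roots of the weight. Expanding each
row of `det K(x_i, x_j)` over `n` and integrating gives the sum of `det M(f, f)` over all maps
`f : Fin k → Fin N` (`integral_det_lueKernel`). This is `k!` times the sum of the `k × k` principal
minors of `M`, and `det (1 + c M)` is the sum of `c^k` times these sums of minors
(`det_one_add_smul_expansion`).
-/

open Nat MeasureTheory

/-- The LUE correlation kernel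
`K_N^L(x,y) = (xy)^{a/2} e^{-(x+y)/2} Σ_{n<N} (n!/Γ(a+n+1)) L_n^a(x) L_n^a(y)`. -/
noncomputable def lueKernel (a : ℝ) (N : ℕ) (x y : ℝ) : ℝ :=
  (x * y) ^ (a / 2) * Real.exp (-(x + y) / 2) *
    ∑ n ∈ Finset.range N, (n ! / Real.Gamma (a + n + 1)) * laguerreP a n x * laguerreP a n y

/-- The Vandermonde-squared factor `Π_{i<j} (x_j - x_i)²`. -/
noncomputable def vdm2 (n : ℕ) (x : Fin n → ℝ) : ℝ :=
  ∏ p ∈ Finset.univ.filter (fun p : Fin n × Fin n => p.1 < p.2), (x p.2 - x p.1) ^ 2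

/-- The LUE normalisation `Z_N = ∫_{(0,∞)^N} Π_l x_l^a e^{-x_l} Π_{i<j}(x_j-x_i)² dx`. -/
noncomputable def lueZ (a : ℝ) (n : ℕ) : ℝ :=
  ∫ x in Set.univ.pi (fun _ : Fin n => Set.Ioi (0:ℝ)),
    (∏ l, (x l) ^ a * Real.exp (-(x l))) * vdm2 n x

/-! ### Andréief's identity -/

/-- One-sided Andréief formula: expanding the determinant reduces the integral to products of
one-dimensional integrals. -/
lemma integral_prod_mul_det {n : ℕ} (μ : Measure ℝ) [SigmaFinite μ] (f g : Fin n → ℝ → ℝ)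
    (h : ∀ i j, Integrable (fun x => f i x * g j x) μ) :
    Integrable (fun x : Fin n → ℝ =>
      (∏ i, f i (x i)) * Matrix.det (Matrix.of fun i j => g i (x j))) (Measure.pi fun _ => μ) ∧
    ∫ x : Fin n → ℝ, (∏ i, f i (x i)) * Matrix.det (Matrix.of fun i j => g i (x j))
        ∂(Measure.pi fun _ => μ)
      = Matrix.det (Matrix.of fun i j => ∫ x, f j x * g i x ∂μ) := by
  have e : (fun x : Fin n → ℝ => (∏ i, f i (x i)) * Matrix.det (Matrix.of fun i j => g i (x j)))
      = fun x => ∑ σ : Equiv.Perm (Fin n), ((Equiv.Perm.sign σ : ℤ) : ℝ) *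
          ∏ i, (f i (x i) * g (σ i) (x i)) := by
    funext x
    rw [Matrix.det_apply', Finset.mul_sum]
    refine Finset.sum_congr rfl fun σ _ => ?_
    rw [Finset.prod_mul_distrib]
    simp only [Matrix.of_apply]
    ring
  have hi : ∀ σ : Equiv.Perm (Fin n), Integrable (fun x : Fin n → ℝ =>
      ((Equiv.Perm.sign σ : ℤ) : ℝ) * ∏ i, (f i (x i) * g (σ i) (x i)))
      (Measure.pi fun _ => μ) := fun σ =>
    (Integrable.fintype_prod (f := fun i x => f i x * g (σ i) x) fun i => h i (σ i)).const_mul _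
  rw [e]
  refine ⟨integrable_finsetSum _ fun σ _ => hi σ, ?_⟩
  rw [integral_finsetSum _ fun σ _ => hi σ, Matrix.det_apply']
  refine Finset.sum_congr rfl fun σ _ => ?_
  rw [integral_const_mul,
    integral_fintype_prod_eq_prod (fun i x => f i x * g (σ i) x)]
  rfl

/-- Andréief's identity. -/
lemma integral_det_mul_det {n : ℕ} (μ : Measure ℝ) [SigmaFinite μ] (f g : Fin n → ℝ → ℝ)
    (h : ∀ i j, Integrable (fun x => f i x * g j x) μ) :
    ∫ x : Fin n → ℝ, Matrix.det (Matrix.of fun i j => f i (x j)) *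
        Matrix.det (Matrix.of fun i j => g i (x j)) ∂(Measure.pi fun _ => μ)
      = (n ! : ℝ) * Matrix.det (Matrix.of fun i j => ∫ x, f j x * g i x ∂μ) := by
  have e : (fun x : Fin n → ℝ => Matrix.det (Matrix.of fun i j => f i (x j)) *
        Matrix.det (Matrix.of fun i j => g i (x j)))
      = fun x => ∑ σ : Equiv.Perm (Fin n), ((Equiv.Perm.sign σ : ℤ) : ℝ) *
          ((∏ i, f (σ i) (x i)) * Matrix.det (Matrix.of fun i j => g i (x j))) := by
    funext x
    rw [Matrix.det_apply', Finset.sum_mul]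
    refine Finset.sum_congr rfl fun σ _ => ?_
    simp only [Matrix.of_apply]
    ring
  have key := fun σ : Equiv.Perm (Fin n) =>
    integral_prod_mul_det μ (fun i => f (σ i)) g fun i j => h (σ i) j
  rw [e, integral_finsetSum _ fun σ _ => (key σ).1.const_mul _]
  have hs : ∀ σ : Equiv.Perm (Fin n),
      ∫ x : Fin n → ℝ, ((Equiv.Perm.sign σ : ℤ) : ℝ) *
          ((∏ i, f (σ i) (x i)) * Matrix.det (Matrix.of fun i j => g i (x j)))
          ∂(Measure.pi fun _ => μ)
        = Matrix.det (Matrix.of fun i j => ∫ x, f j x * g i x ∂μ) := by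
    intro σ
    rw [integral_const_mul, (key σ).2]
    have := Matrix.det_permute' σ (Matrix.of fun i j => ∫ x, f j x * g i x ∂μ)
    have e2 : (Matrix.of fun i j => ∫ x, f j x * g i x ∂μ).submatrix id σ
      = Matrix.of fun i j => ∫ x, f (σ j) x * g i x ∂μ := rfl
    rw [e2] at this
    rw [this, ← mul_assoc]
    have : ((Equiv.Perm.sign σ : ℤ) : ℝ) * ((Equiv.Perm.sign σ : ℤ) : ℝ) = 1 := by
      rw [← Int.cast_mul, ← Units.val_mul, Int.units_mul_self]; simp
    rw [this, one_mul]
  rw [Finset.sum_congr rfl fun σ _ => hs σ]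
  simp [Finset.card_univ, Fintype.card_perm]

/-! ### Sums of principal minors -/

/-- Only injective `f` contribute, and each `k`-subset is the image of `k!` of them. -/
lemma sum_det_submatrix_eq {N k : ℕ} (M : Matrix (Fin N) (Fin N) ℝ) :
    ∑ f : Fin k → Fin N, (M.submatrix f f).det
      = (k ! : ℝ) * ∑ s ∈ (Finset.univ : Finset (Fin N)).powersetCard k,
          (M.submatrix (Subtype.val : s → Fin N) (Subtype.val : s → Fin N)).det := by
  classical
  have h1 : ∑ f : Fin k → Fin N, (M.submatrix f f).det
      = ∑ f : Fin k → Fin N with Function.Injective f, (M.submatrix f f).det := by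
    rw [Finset.sum_filter]
    refine Finset.sum_congr rfl fun f _ => ?_
    split_ifs with hf
    · rfl
    · rw [Function.Injective] at hf
      push Not at hf
      obtain ⟨i, j, hij, hne⟩ := hf
      exact Matrix.det_zero_of_row_eq hne (by ext l; simp [hij])
  have hmaps : ∀ f ∈ (Finset.univ : Finset (Fin k → Fin N)).filter Function.Injective,
      Finset.image f Finset.univ ∈ (Finset.univ : Finset (Fin N)).powersetCard k := by
    intro f hf
    simp only [Finset.mem_filter, Finset.mem_univ, true_and] at hf
    simp [Finset.mem_powersetCard, Finset.card_image_of_injective _ hf]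
  rw [h1, ← Finset.sum_fiberwise_of_maps_to hmaps, Finset.mul_sum]
  refine Finset.sum_congr rfl fun s hs => ?_
  have hcard : s.card = k := (Finset.mem_powersetCard.mp hs).2
  have hset : (((Finset.univ : Finset (Fin k → Fin N)).filter Function.Injective).filter
        fun f => Finset.image f Finset.univ = s)
      = (Finset.univ : Finset (Fin k ≃ s)).image fun e => fun i => (e i : Fin N) := by
    ext f
    simp only [Finset.mem_filter, Finset.mem_univ, true_and, Finset.mem_image]
    constructor
    · rintro ⟨hf, him⟩
      have hm : ∀ i, f i ∈ s := fun i => him ▸ Finset.mem_image_of_mem f (Finset.mem_univ i)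
      refine ⟨Equiv.ofBijective (fun i => ⟨f i, hm i⟩) ⟨fun i j hij => hf ?_, ?_⟩, rfl⟩
      · simpa using hij
      · rintro ⟨y, hy⟩
        rw [← him] at hy
        obtain ⟨i, -, rfl⟩ := Finset.mem_image.mp hy
        exact ⟨i, rfl⟩
    · rintro ⟨e, rfl⟩
      refine ⟨Subtype.val_injective.comp e.injective, ?_⟩
      ext y
      simp only [Finset.mem_image, Finset.mem_univ, true_and]
      constructor
      · rintro ⟨i, rfl⟩
        exact (e i).2
      · intro hy
        exact ⟨e.symm ⟨y, hy⟩, by simp⟩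
  rw [hset, Finset.sum_image]
  · have : ∀ e : Fin k ≃ s, (M.submatrix (fun i => (e i : Fin N)) fun i => (e i : Fin N)).det
        = (M.submatrix (Subtype.val : s → Fin N) (Subtype.val : s → Fin N)).det := fun e =>
      Matrix.det_submatrix_equiv_self e (M.submatrix Subtype.val Subtype.val)
    rw [Finset.sum_congr rfl fun e _ => this e, Finset.sum_const, nsmul_eq_mul, Finset.card_univ,
      Fintype.card_equiv (Fintype.equivOfCardEq (by simp [hcard])), Fintype.card_fin]
  · intro e _ e' _ hee
    ext i
    exact congrArg Fin.val (congrFun hee i)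

/-- The finite-dimensional Fredholm expansion of a determinant. -/
lemma det_one_add_smul_expansion {N : ℕ} (M : Matrix (Fin N) (Fin N) ℝ) (c : ℝ) :
    (1 + c • M).det = ∑ k ∈ Finset.range (N + 1), c ^ k / (k ! : ℝ) *
      ∑ f : Fin k → Fin N, (M.submatrix f f).det := by
  have hev : (1 + c • M).det
      = (Matrix.det (1 + (Polynomial.X : Polynomial ℝ) • M.map Polynomial.C)).eval c := by
    rw [← Polynomial.coe_evalRingHom, RingHom.map_det]
    congr 1
    ext i j
    by_cases hij : i = j <;> simp [hij, mul_comm c]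
  have hdeg : (Matrix.det (1 + (Polynomial.X : Polynomial ℝ) • M.map Polynomial.C)).natDegree
      < N + 1 := by
    have := Polynomial.natDegree_det_X_add_C_le M 1
    rw [add_comm, Matrix.map_one _ (map_zero _) (map_one _), Fintype.card_fin] at this
    omega
  rw [hev, Polynomial.eval_eq_sum_range' hdeg]
  refine Finset.sum_congr rfl fun k _ => ?_
  rw [Matrix.coeff_det_one_add_X_smul_eq_sum_minors, sum_det_submatrix_eq]
  have : (k ! : ℝ) ≠ 0 := by positivity
  field_simp

/-! ### Laguerre polynomials -/

lemma vdm2_eq {n : ℕ} (x : Fin n → ℝ) : vdm2 n x = (Matrix.vandermonde x).det ^ 2 := by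
  rw [vdm2, Matrix.det_vandermonde, Finset.prod_pow]
  congr 1
  rw [Finset.prod_sigma']
  refine Finset.prod_bij' (fun p _ => ⟨p.1, p.2⟩) (fun p _ => (p.1, p.2)) ?_ ?_ ?_ ?_ ?_ <;> simp

/-- The weight `x^a e^{-x}`. -/
noncomputable def lagW (a x : ℝ) : ℝ := x ^ a * Real.exp (-x)

/-- The coefficient of `x^k` in the monic Laguerre polynomial `(-1)^n n! L_n^a`. -/
noncomputable def lagCoeff (a : ℝ) (n k : ℕ) : ℝ :=
  (-1 : ℝ) ^ n * n ! * ((-1 : ℝ) ^ k *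
      (Real.Gamma (n + a + 1) / (Real.Gamma (k + a + 1) * (n - k)! * k !)))

/-- The monic Laguerre polynomial `(-1)^n n! L_n^a`. -/
noncomputable def lagPoly (a : ℝ) (n : ℕ) : Polynomial ℝ :=
  ∑ k ∈ Finset.range (n + 1), Polynomial.C (lagCoeff a n k) * Polynomial.X ^ k

/-- The squared norm `n! Γ(n+a+1)` of the monic Laguerre polynomial in `L²(x^a e^{-x} dx)`. -/
noncomputable def lagNorm (a : ℝ) (n : ℕ) : ℝ := n ! * Real.Gamma (n + a + 1)

section
variable {a : ℝ}

lemma gamma_shift_pos (ha : -1 < a) (n : ℕ) : 0 < Real.Gamma (n + a + 1) :=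
  Real.Gamma_pos_of_pos (by have : (0 : ℝ) ≤ n := n.cast_nonneg; linarith)

lemma lagNorm_pos (ha : -1 < a) (n : ℕ) : 0 < lagNorm a n :=
  mul_pos (by positivity) (gamma_shift_pos ha n)

lemma lagPoly_eval (a : ℝ) (n : ℕ) (x : ℝ) :
    (lagPoly a n).eval x = (-1 : ℝ) ^ n * n ! * laguerreP a n x := by
  simp only [lagPoly, laguerreP, lagCoeff, Polynomial.eval_finsetSum, Finset.mul_sum]
  refine Finset.sum_congr rfl fun k _ => ?_
  simp only [Polynomial.eval_mul, Polynomial.eval_C, Polynomial.eval_pow, Polynomial.eval_X]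
  ring

lemma lagPoly_coeff (a : ℝ) (n k : ℕ) :
    (lagPoly a n).coeff k = if k ≤ n then lagCoeff a n k else 0 := by
  simp [lagPoly, Polynomial.finsetSum_coeff, Polynomial.coeff_X_pow]

lemma lagCoeff_self (ha : -1 < a) (n : ℕ) : lagCoeff a n n = 1 := by
  have := (gamma_shift_pos ha n).ne'
  have h2 : (-1 : ℝ) ^ n * (-1) ^ n = 1 := by rw [← mul_pow]; simp
  have h3 : (n ! : ℝ) ≠ 0 := by positivity
  simp only [lagCoeff, Nat.sub_self, Nat.factorial_zero, Nat.cast_one, mul_one]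
  field_simp
  linarith

lemma lagPoly_natDegree (ha : -1 < a) (n : ℕ) : (lagPoly a n).natDegree = n := by
  refine le_antisymm (Polynomial.natDegree_le_iff_coeff_eq_zero.mpr fun k hk => ?_)
    (Polynomial.le_natDegree_of_ne_zero ?_)
  · rw [lagPoly_coeff, if_neg (by omega)]
  · rw [lagPoly_coeff, if_pos le_rfl, lagCoeff_self ha]; exact one_ne_zero

lemma lagPoly_monic (ha : -1 < a) (n : ℕ) : (lagPoly a n).Monic := by
  rw [Polynomial.Monic, Polynomial.leadingCoeff, lagPoly_natDegree ha, lagPoly_coeff,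
    if_pos le_rfl, lagCoeff_self ha]

lemma pow_mul_lagW {x : ℝ} (hx : 0 < x) (j : ℕ) :
    x ^ j * lagW a x = Real.exp (-x) * x ^ ((j + a + 1 : ℝ) - 1) := by
  rw [lagW, add_sub_cancel_right, Real.rpow_add hx, Real.rpow_natCast]
  ring

lemma integrable_pow_mul_lagW (ha : -1 < a) (j : ℕ) :
    IntegrableOn (fun x => x ^ j * lagW a x) (Set.Ioi 0) :=
  (Real.GammaIntegral_convergent
    (by have : (0 : ℝ) ≤ j := j.cast_nonneg; linarith : (0 : ℝ) < j + a + 1)).congr_fun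
    (fun _ hx => (pow_mul_lagW hx j).symm) measurableSet_Ioi

lemma integral_pow_mul_lagW (ha : -1 < a) (j : ℕ) :
    ∫ x in Set.Ioi 0, x ^ j * lagW a x = Real.Gamma (j + a + 1) := by
  rw [Real.Gamma_eq_integral
    (by have : (0 : ℝ) ≤ j := j.cast_nonneg; linarith : (0 : ℝ) < j + a + 1)]
  exact setIntegral_congr_fun measurableSet_Ioi fun _ hx => pow_mul_lagW hx j

lemma integrable_poly_mul_lagW (ha : -1 < a) (p : Polynomial ℝ) :
    IntegrableOn (fun x => p.eval x * lagW a x) (Set.Ioi 0) := by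
  simp_rw [Polynomial.eval_eq_sum_range, Finset.sum_mul, mul_assoc]
  exact integrable_finsetSum _ fun k _ => (integrable_pow_mul_lagW ha k).const_mul _

lemma gamma_add_nat {z : ℝ} (hz : 0 < z) (j : ℕ) :
    Real.Gamma (z + j) = (ascPochhammer ℝ j).eval z * Real.Gamma z := by
  induction j with
  | zero => simp
  | succ j ih =>
    rw [Nat.cast_succ, ← add_assoc, Real.Gamma_add_one (by positivity), ih,
      ascPochhammer_succ_eval]
    ring

/-- The integral of `x^j` against the `n`-th monic Laguerre polynomial is, up to a constant, the
`n`-th finite difference of the degree-`j` polynomial `k ↦ (k+a+1)⋯(k+a+j)`. -/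
lemma integral_pow_mul_lagPoly (ha : -1 < a) {j n : ℕ} (hj : j ≤ n) :
    ∫ x in Set.Ioi 0, x ^ j * (lagPoly a n).eval x * lagW a x
      = if j = n then lagNorm a n else 0 := by
  set P : Polynomial ℝ := (ascPochhammer ℝ j).comp (Polynomial.X + Polynomial.C (a + 1)) with hP
  have hPdeg : P.natDegree = j := by
    rw [hP, Polynomial.natDegree_comp, ascPochhammer_natDegree, Polynomial.natDegree_X_add_C,
      mul_one]
  have hPlc : P.leadingCoeff = 1 := by
    rw [hP]
    exact ((monic_ascPochhammer ℝ j).comp (Polynomial.monic_X_add_C _)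
      (by rw [Polynomial.natDegree_X_add_C]; exact one_ne_zero))
  have hdiff : (fwdDiff (1 : ℝ))^[n] P.eval 0 = if j = n then (n ! : ℝ) else 0 := by
    split_ifs with h
    · have := congrFun (Polynomial.fwdDiff_iter_degree_eq_factorial P) 0
      rw [hPdeg, hPlc, h] at this
      simpa using this
    · have := congrFun (Polynomial.fwdDiff_iter_eq_zero_of_degree_lt
        (P := P) (n := n) (by omega)) 0
      simpa using this
  rw [fwdDiff_iter_eq_sum_shift] at hdiff
  have e : (fun x => x ^ j * (lagPoly a n).eval x * lagW a x)
      = fun x => ∑ k ∈ Finset.range (n + 1), lagCoeff a n k * (x ^ (k + j) * lagW a x) := by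
    funext x
    simp only [lagPoly, Polynomial.eval_finsetSum, Finset.mul_sum, Finset.sum_mul]
    refine Finset.sum_congr rfl fun k _ => ?_
    simp only [Polynomial.eval_mul, Polynomial.eval_C, Polynomial.eval_pow, Polynomial.eval_X]
    ring
  rw [e, integral_finsetSum _ fun k _ => (integrable_pow_mul_lagW ha (k + j)).const_mul _]
  simp_rw [integral_const_mul, integral_pow_mul_lagW ha]
  have hterm : ∀ k ∈ Finset.range (n + 1),
      lagCoeff a n k * Real.Gamma ((k + j : ℕ) + a + 1)
        = Real.Gamma (n + a + 1) *
          (((-1 : ℤ) ^ (n - k) * n.choose k) • P.eval (0 + k • (1 : ℝ))) := by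
    intro k hk
    have hk : k ≤ n := Nat.lt_succ_iff.mp (Finset.mem_range.mp hk)
    have hz : (0 : ℝ) < k + a + 1 := by have : (0 : ℝ) ≤ k := k.cast_nonneg; linarith
    have hg : Real.Gamma ((k + j : ℕ) + a + 1) = P.eval (k : ℝ) * Real.Gamma (k + a + 1) := by
      have := gamma_add_nat hz j
      rw [hP, Polynomial.eval_comp]
      simp only [Polynomial.eval_add, Polynomial.eval_X, Polynomial.eval_C]
      rw [← add_assoc, ← this]
      congr 1; push_cast; ring
    have hg0 := (gamma_shift_pos ha k).ne'
    have hs : (-1 : ℝ) ^ n * (-1) ^ k = (-1) ^ (n - k) := by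
      obtain ⟨d, rfl⟩ := Nat.exists_eq_add_of_le hk
      rw [Nat.add_sub_cancel_left, pow_add]
      have : (-1 : ℝ) ^ k * (-1) ^ k = 1 := by rw [← mul_pow]; simp
      linear_combination (-1 : ℝ) ^ d * this
    have hc : (n.choose k : ℝ) * (k ! * (n - k)!) = n ! := by
      rw [← mul_assoc]; exact_mod_cast Nat.choose_mul_factorial_mul_factorial hk
    have hk0 : (k ! : ℝ) ≠ 0 := by positivity
    have hnk0 : ((n - k)! : ℝ) ≠ 0 := by positivity
    rw [hg, lagCoeff, ← hc, zsmul_eq_mul]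
    push_cast
    rw [← hs, nsmul_eq_mul, mul_one, zero_add]
    field_simp
  rw [Finset.sum_congr rfl hterm, ← Finset.mul_sum, hdiff, lagNorm]
  split_ifs <;> ring

/-- Orthogonality of the monic Laguerre polynomials. -/
lemma integral_lagPoly_mul_lagPoly (ha : -1 < a) (m n : ℕ) :
    ∫ x in Set.Ioi 0, (lagPoly a m).eval x * (lagPoly a n).eval x * lagW a x
      = if m = n then lagNorm a n else 0 := by
  wlog hmn : m ≤ n generalizing m n
  · have := this n m (by omega)
    rw [if_neg (by omega)]
    rw [if_neg (by omega)] at this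
    refine Eq.trans (integral_congr_ae (.of_forall fun x => ?_)) this
    simp only
    ring
  have e : (fun x => (lagPoly a m).eval x * (lagPoly a n).eval x * lagW a x)
      = fun x => ∑ k ∈ Finset.range (m + 1),
          lagCoeff a m k * (x ^ k * (lagPoly a n).eval x * lagW a x) := by
    funext x
    rw [lagPoly]
    simp only [Polynomial.eval_finsetSum, Finset.sum_mul]
    refine Finset.sum_congr rfl fun k _ => ?_
    simp only [Polynomial.eval_mul, Polynomial.eval_C, Polynomial.eval_pow, Polynomial.eval_X]
    ring
  have hi : ∀ k, IntegrableOn (fun x => x ^ k * (lagPoly a n).eval x * lagW a x) (Set.Ioi 0) := by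
    intro k
    have := integrable_poly_mul_lagW ha (Polynomial.X ^ k * lagPoly a n)
    simpa using this
  rw [e, integral_finsetSum _ fun k _ => (hi k).const_mul _]
  simp_rw [integral_const_mul]
  rw [Finset.sum_range_succ, integral_pow_mul_lagPoly ha hmn, lagCoeff_self ha, one_mul,
    Finset.sum_eq_zero, zero_add]
  intro k hk
  have := Finset.mem_range.mp hk
  rw [integral_pow_mul_lagPoly ha (by omega), if_neg (by omega), mul_zero]

end

/-! ### The thinned integral as a determinant -/

/-- The overlap matrix `(∫_{x > t} p_i p_j x^a e^{-x} dx / h_j)_{i,j}` of the monic Laguerre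
polynomials `p_i` with squared norms `h_j`. -/
noncomputable def lagOverlap (a t : ℝ) (N : ℕ) : Matrix (Fin N) (Fin N) ℝ :=
  Matrix.of fun i j =>
    (∫ x in Set.Ioi t, (lagPoly a i).eval x * (lagPoly a j).eval x * lagW a x) / lagNorm a j

lemma integrable_lagPoly_mul_lagPoly {a : ℝ} (ha : -1 < a) (m n : ℕ) :
    IntegrableOn (fun x => (lagPoly a m).eval x * (lagPoly a n).eval x * lagW a x)
      (Set.Ioi 0) := by
  simpa using integrable_poly_mul_lagW ha (lagPoly a m * lagPoly a n)

/-- The Vandermonde determinant is unchanged when its monomials are replaced by the monic Laguerre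
polynomials; the weight goes into the columns of one of the two factors. -/
lemma prod_mul_vdm2_eq {a : ℝ} (ha : -1 < a) {N : ℕ} (c : ℝ → ℝ) (x : Fin N → ℝ) :
    (∏ l, c (x l)) * vdm2 N x
      = Matrix.det (Matrix.of fun i j : Fin N => c (x j) * (lagPoly a i).eval (x j)) *
        Matrix.det (Matrix.of fun i j : Fin N => (lagPoly a i).eval (x j)) := by
  have h1 := Matrix.det_mul_row (fun j => c (x j))
    (Matrix.of fun i j : Fin N => (lagPoly a i).eval (x j))
  have h2 := Matrix.det_eval_matrixOfPolynomials_eq_det_vandermonde x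
    (fun i : Fin N => lagPoly a i) (fun i => lagPoly_natDegree ha i) (fun i => lagPoly_monic ha i)
  have h3 := Matrix.det_transpose
    (Matrix.of fun i j : Fin N => (lagPoly a i).eval (x j))
  change (Matrix.of fun i j : Fin N => (lagPoly a j).eval (x i)).det = _ at h3
  simp only [Matrix.of_apply] at h1
  rw [vdm2_eq, h2, h3, h1]
  ring

/-- The unnormalised thinned gap probability, as a determinant. -/
lemma integral_thinned_eq {a : ℝ} (ha : -1 < a) (N : ℕ) (ξ s : ℝ) :
    ∫ x in Set.univ.pi (fun _ : Fin N => Set.Ioi (0:ℝ)),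
        (∏ l, (1 - ξ * (if s < x l then 1 else 0)) * (x l) ^ a * Real.exp (-(x l))) * vdm2 N x
      = (N ! : ℝ) * (∏ i : Fin N, lagNorm a i) *
          (1 + (-ξ) • lagOverlap a (max s 0) N).det := by
  set c : ℝ → ℝ := fun x => (1 - ξ * (if s < x then 1 else 0)) * lagW a x with hc
  have e : ∀ x : Fin N → ℝ,
      (∏ l, (1 - ξ * (if s < x l then 1 else 0)) * (x l) ^ a * Real.exp (-(x l))) * vdm2 N x
      = Matrix.det (Matrix.of fun i j : Fin N => c (x j) * (lagPoly a i).eval (x j)) *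
        Matrix.det (Matrix.of fun i j : Fin N => (lagPoly a i).eval (x j)) := by
    intro x
    rw [← prod_mul_vdm2_eq ha c x]
    simp only [hc, lagW, mul_assoc]
  simp_rw [e]
  rw [volume_pi, Measure.restrict_pi_pi]
  have e1 : ∀ i j : ℕ, (fun x => c x * (lagPoly a i).eval x * (lagPoly a j).eval x)
      = fun x => (lagPoly a i).eval x * (lagPoly a j).eval x * lagW a x - ξ *
        (Set.Ioi s).indicator
          (fun x => (lagPoly a i).eval x * (lagPoly a j).eval x * lagW a x) x := by
    intro i j
    funext x
    simp only [hc, Set.indicator, Set.mem_Ioi]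
    split_ifs <;> ring
  have hI := fun i j : ℕ =>
    ((integrable_lagPoly_mul_lagPoly ha i j).indicator (measurableSet_Ioi (a := s))).const_mul ξ
  -- The entries of the Andréief determinant are `h_j δ_ij - ξ ∫_{x > max s 0} p_i p_j x^a e^{-x}`.
  rw [integral_det_mul_det (volume.restrict (Set.Ioi (0 : ℝ)))
    (fun (i : Fin N) x => c x * (lagPoly a i).eval x)
    (fun (i : Fin N) x => (lagPoly a i).eval x)]
  · rw [mul_assoc]
    congr 1
    have hmat : (Matrix.of fun i j : Fin N => ∫ x in Set.Ioi 0,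
          c x * (lagPoly a j).eval x * (lagPoly a i).eval x)
        = Matrix.of fun i j : Fin N =>
          lagNorm a j * (1 + (-ξ) • lagOverlap a (max s 0) N) i j := by
      ext i j
      simp only [Matrix.of_apply]
      rw [e1, integral_sub (integrable_lagPoly_mul_lagPoly ha j i) (hI j i),
        integral_lagPoly_mul_lagPoly ha, integral_const_mul,
        setIntegral_indicator measurableSet_Ioi, Set.Ioi_inter_Ioi, max_comm 0 s]
      have hn := (lagNorm_pos ha j).ne'
      simp only [lagOverlap, Matrix.add_apply, Matrix.smul_apply, Matrix.of_apply,
        Matrix.one_apply, smul_eq_mul]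
      simp_rw [mul_comm (Polynomial.eval _ (lagPoly a j))]
      by_cases hij : i = j
      · subst hij
        simp only [if_true]
        field_simp
        ring
      · rw [if_neg hij, if_neg (fun h => hij (Fin.ext h.symm))]
        field_simp
        ring
    rw [hmat, Matrix.det_mul_row]
  · intro i j
    rw [e1]
    exact (integrable_lagPoly_mul_lagPoly ha i j).sub (hI i j)

lemma lueZ_eq {a : ℝ} (ha : -1 < a) (N : ℕ) :
    lueZ a N = (N ! : ℝ) * ∏ i : Fin N, lagNorm a i := by
  -- At `ξ = 0` the thinning factor is `1`.
  have := integral_thinned_eq ha N 0 0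
  simpa [lueZ] using this

/-! ### The correlation kernel -/

/-- The square root `x^{a/2} e^{-x/2}` of the weight. -/
noncomputable def lagU (a x : ℝ) : ℝ := x ^ (a / 2) * Real.exp (-x / 2)

lemma lagU_mul_self {a x : ℝ} (hx : 0 < x) : lagU a x * lagU a x = lagW a x := by
  rw [lagU, lagW, mul_mul_mul_comm, ← Real.rpow_add hx, ← Real.exp_add]
  congr 2 <;> ring

/-- On the positive half-line the kernel is separable; the factor `(n!)²` between `L_n` and the
monic polynomials turns `n!/Γ(a+n+1)` into `1/h_n`. -/
lemma lueKernel_eq {a x y : ℝ} (ha : -1 < a) (N : ℕ) (hx : 0 < x) (hy : 0 < y) :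
    lueKernel a N x y = ∑ n : Fin N,
      (lagU a x * (lagPoly a n).eval x / lagNorm a n) * (lagU a y * (lagPoly a n).eval y) := by
  rw [lueKernel, Real.mul_rpow hx.le hy.le, ← Fin.sum_univ_eq_sum_range
    (fun n => (n ! / Real.Gamma (a + n + 1)) * laguerreP a n x * laguerreP a n y), Finset.mul_sum]
  refine Finset.sum_congr rfl fun n _ => ?_
  have hg := (gamma_shift_pos ha n).ne'
  have hn : ((n : ℕ)! : ℝ) ≠ 0 := by positivity
  have hs : (-1 : ℝ) ^ (n : ℕ) * (-1) ^ (n : ℕ) = 1 := by rw [← mul_pow]; simp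
  have he : Real.exp (-(x + y) / 2) = Real.exp (-x / 2) * Real.exp (-y / 2) := by
    rw [← Real.exp_add]; congr 1; ring
  rw [lagPoly_eval, lagPoly_eval, lagNorm, lagU, lagU, he, add_comm a (n : ℝ)]
  field_simp
  rw [sq, hs]
  ring

/-- Expanding the kernel row by row turns the `k`-point integral into the sum of all `k × k`
minors of the overlap matrix, over arbitrary index maps. -/
lemma integral_det_lueKernel {a t : ℝ} (ha : -1 < a) (ht : 0 ≤ t) (N k : ℕ) :
    ∫ x in Set.univ.pi (fun _ : Fin k => Set.Ioi t),
        Matrix.det (Matrix.of fun i j : Fin k => lueKernel a N (x i) (x j))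
      = ∑ f : Fin k → Fin N, ((lagOverlap a t N).submatrix f f).det := by
  set F : Fin N → ℝ → ℝ := fun n x => lagU a x * (lagPoly a n).eval x / lagNorm a n with hF
  set G : Fin N → ℝ → ℝ := fun n x => lagU a x * (lagPoly a n).eval x with hG
  have hcongr : ∀ x ∈ Set.univ.pi (fun _ : Fin k => Set.Ioi t),
      Matrix.det (Matrix.of fun i j : Fin k => lueKernel a N (x i) (x j))
      = ∑ f : Fin k → Fin N, (∏ i, F (f i) (x i)) *
          Matrix.det (Matrix.of fun i j : Fin k => G (f i) (x j)) := by
    intro x hx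
    have hpos : ∀ i, 0 < x i := fun i => ht.trans_lt (hx i (Set.mem_univ i))
    have e : (Matrix.of fun i j : Fin k => lueKernel a N (x i) (x j))
        = fun i => ∑ n : Fin N, F n (x i) • fun j => G n (x j) := by
      ext i j
      rw [Matrix.of_apply, lueKernel_eq ha N (hpos i) (hpos j), Finset.sum_apply]
      rfl
    rw [e]
    have := (Matrix.detRowAlternating (R := ℝ) (n := Fin k)).toMultilinearMap.map_sum
      (fun i (n : Fin N) => F n (x i) • fun j => G n (x j))
    refine this.trans (Finset.sum_congr rfl fun f _ => ?_)
    exact (Matrix.detRowAlternating (R := ℝ) (n := Fin k)).toMultilinearMap.map_smul_univ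
      (fun i => F (f i) (x i)) (fun i j => G (f i) (x j))
  rw [setIntegral_congr_fun (MeasurableSet.univ_pi fun _ => measurableSet_Ioi) hcongr,
    volume_pi, Measure.restrict_pi_pi]
  have hFG : ∀ m n : Fin N, ∀ x ∈ Set.Ioi t, F m x * G n x
      = (lagPoly a n).eval x * (lagPoly a m).eval x * lagW a x / lagNorm a m := by
    intro m n x hx
    rw [← lagU_mul_self (ht.trans_lt hx)]
    simp only [hF, hG]
    ring
  have hint : ∀ m n : Fin N,
      Integrable (fun x => F m x * G n x) (volume.restrict (Set.Ioi t)) := fun m n =>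
    IntegrableOn.congr_fun
      (((integrable_lagPoly_mul_lagPoly ha n m).mono_set (Set.Ioi_subset_Ioi ht)).div_const _)
      (fun x hx => (hFG m n x hx).symm) measurableSet_Ioi
  have key := fun f : Fin k → Fin N => integral_prod_mul_det (volume.restrict (Set.Ioi t))
    (fun i => F (f i)) (fun i => G (f i)) fun i j => hint (f i) (f j)
  rw [integral_finsetSum _ fun f _ => (key f).1]
  refine Finset.sum_congr rfl fun f _ => ?_
  rw [(key f).2]
  congr 1
  ext i j
  simp only [Matrix.of_apply, Matrix.submatrix_apply, lagOverlap]
  rw [setIntegral_congr_fun measurableSet_Ioi (hFG (f j) (f i)), integral_div]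

/-- Thinned gap probability identity for the LUE:
`(1/Z_N) ∫_{(0,∞)^N} Π_l (1 - ξ χ_{x_l>s}) x_l^a e^{-x_l} Π_{i<j}(x_j-x_i)² dx
  = Σ_{k=0}^N ((-ξ)^k/k!) ∫_{(max(s,0),∞)^k} det[K_N^L(x_i,x_j)] dx`, and `Z_N > 0`. -/
theorem lue_thinned_gap_probability (a : ℝ) (ha : -1 < a) (N : ℕ) (hN : 1 ≤ N) (ξ s : ℝ) :
    0 < lueZ a N ∧
    (1 / lueZ a N) *
        (∫ x in Set.univ.pi (fun _ : Fin N => Set.Ioi (0:ℝ)),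
          (∏ l, (1 - ξ * (if s < x l then 1 else 0)) * (x l) ^ a * Real.exp (-(x l))) *
            vdm2 N x)
      = ∑ k ∈ Finset.range (N + 1), (-ξ) ^ k / (k ! : ℝ) *
          ∫ x in Set.univ.pi (fun _ : Fin k => Set.Ioi (max s 0)),
            Matrix.det (Matrix.of fun i j : Fin k => lueKernel a N (x i) (x j)) := by
  have hZ : 0 < lueZ a N := by
    rw [lueZ_eq ha]
    exact mul_pos (by positivity) (Finset.prod_pos fun i _ => lagNorm_pos ha i)
  refine ⟨hZ, ?_⟩
  rw [integral_thinned_eq ha, ← lueZ_eq ha, ← mul_assoc, one_div, inv_mul_cancel₀ hZ.ne', one_mul,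
    det_one_add_smul_expansion]
  simp_rw [integral_det_lueKernel ha (le_max_right s 0)]
end

section
/- The spectral density of the N×N GUE satisfies a second-order nonlinear differential equation: let σ(x) = ρ_N^G(x) = e^{-x²} Σ_{n=0}^{N-1} H_n(x)²/(√π 2^n n!). Then for every real x, (σ''(x))² - 4 (x σ'(x) - σ(x))² + 8N (σ'(x))² = 0. -/
/-!
Write `N = m + 1`, `a = H_{m+1}(x)`, `b = H_m(x)` and `c = 1 / (√π 2^m m!)`. The confluent
Christoffel–Darboux formula (`rhoG_succ`) puts the density in closed form,
`σ = c e^{-x²} (a² + 2N b² - 2x a b) / 2`. With `a' = 2N b` and `b' = 2x b - a`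
(`hasDerivAt_hermiteP_succ`, `hasDerivAt_hermiteP`), differentiating gives
`σ' = -c e^{-x²} a b` and `σ'' = c e^{-x²} (a² - 2N b²)`, while
`x σ' - σ = -c e^{-x²} (a² + 2N b²) / 2`. The differential equation is then the identity
`(a² - 2N b²)² - (a² + 2N b²)² + 8N a² b² = 0`.
-/

open Nat

/-- The GUE spectral density `ρ_N^G(x) = e^{-x²} Σ_{n<N} H_n(x)²/(√π 2^n n!)`. -/
noncomputable def rhoG (N : ℕ) (x : ℝ) : ℝ :=
  Real.exp (-x ^ 2) *
    ∑ n ∈ Finset.range N, (hermiteP n x) ^ 2 / (Real.sqrt Real.pi * 2 ^ n * n !)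

theorem hermiteP_add_two (n : ℕ) (x : ℝ) :
    hermiteP (n + 2) x = 2 * x * hermiteP (n + 1) x - 2 * (n + 1) * hermiteP n x := by
  rw [hermiteP]

/-- The raising form of the derivative; unlike `H_n' = 2n H_{n-1}` it is stated uniformly in `n`,
with no index `n - 1`. -/
theorem hasDerivAt_hermiteP (n : ℕ) (x : ℝ) :
    HasDerivAt (hermiteP n) (2 * x * hermiteP n x - hermiteP (n + 1) x) x := by
  induction n using Nat.twoStepInduction with
  | zero =>
    have h : hermiteP 0 = fun _ => 1 := by funext y; rw [hermiteP]
    have h1 : hermiteP 1 x = 2 * x := by rw [hermiteP]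
    rw [h]
    refine HasDerivAt.congr_deriv (hasDerivAt_const x (1 : ℝ)) ?_
    simp [h1]
  | one =>
    have h : hermiteP 1 = fun y => 2 * y := by funext y; rw [hermiteP]
    have h0 : hermiteP 0 x = 1 := by rw [hermiteP]
    have h2 := hermiteP_add_two 0 x
    refine HasDerivAt.congr_deriv ((hasDerivAt_id x).const_mul (2 : ℝ)) ?_
    norm_num [h0] at h2 ⊢
    rw [h2]
    ring
  | more n ih0 ih1 =>
    have h : hermiteP (n + 2) =
        fun y => 2 * y * hermiteP (n + 1) y - 2 * (n + 1) * hermiteP n y :=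
      funext (hermiteP_add_two n)
    have h3 := hermiteP_add_two (n + 1) x
    push_cast at h3
    have key := ((((hasDerivAt_id x).const_mul (2 : ℝ)).mul ih1).sub
      (ih0.const_mul (2 * ((n : ℝ) + 1))))
    rw [show n + 1 + 1 = n + 2 from rfl] at key
    rw [h3, hermiteP_add_two n x] at *
    rw [h]
    refine HasDerivAt.congr_deriv (key) ?_
    simp only [id]
    ring

/-- The lowering form of the derivative. -/
theorem hasDerivAt_hermiteP_succ (n : ℕ) (x : ℝ) :
    HasDerivAt (hermiteP (n + 1)) (2 * (n + 1) * hermiteP n x) x := by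
  refine HasDerivAt.congr_deriv (hasDerivAt_hermiteP (n + 1) x) ?_
  rw [hermiteP_add_two]
  ring

/-- The confluent Christoffel–Darboux formula for the Hermite polynomials, with the derivatives
of `H_{m+1}` and `H_m` written out. -/
theorem sum_hermiteP_sq (m : ℕ) (x : ℝ) :
    ∑ n ∈ Finset.range (m + 1), (hermiteP n x) ^ 2 / (Real.sqrt Real.pi * 2 ^ n * n !) =
      1 / (Real.sqrt Real.pi * 2 ^ m * m !) * ((hermiteP (m + 1) x ^ 2
        + 2 * (m + 1) * hermiteP m x ^ 2 - 2 * x * hermiteP (m + 1) x * hermiteP m x) / 2) := by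
  have hpi : Real.sqrt Real.pi ≠ 0 := (Real.sqrt_pos.mpr Real.pi_pos).ne'
  induction m with
  | zero =>
    have h0 : hermiteP 0 x = 1 := by rw [hermiteP]
    have h1 : hermiteP 1 x = 2 * x := by rw [hermiteP]
    simp only [Finset.sum_range_one, zero_add, h0, h1, Nat.cast_zero]
    ring
  | succ m ih =>
    have hf : (m ! : ℝ) ≠ 0 := by exact_mod_cast m.factorial_ne_zero
    have hm : (m : ℝ) + 1 ≠ 0 := by positivity
    rw [Finset.sum_range_succ, ih, hermiteP_add_two, Nat.factorial_succ]
    push_cast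
    field_simp
    ring

theorem rhoG_succ (m : ℕ) (x : ℝ) :
    rhoG (m + 1) x = Real.exp (-x ^ 2) * (1 / (Real.sqrt Real.pi * 2 ^ m * m !) *
      ((hermiteP (m + 1) x ^ 2 + 2 * (m + 1) * hermiteP m x ^ 2
        - 2 * x * hermiteP (m + 1) x * hermiteP m x) / 2)) := by
  rw [rhoG, sum_hermiteP_sq]

theorem hasDerivAt_exp_neg_sq (x : ℝ) :
    HasDerivAt (fun y : ℝ => Real.exp (-y ^ 2)) (Real.exp (-x ^ 2) * (-(2 * x))) x := by
  simpa using ((hasDerivAt_pow 2 x).neg).exp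

theorem hasDerivAt_rhoG_succ (m : ℕ) (x : ℝ) :
    HasDerivAt (rhoG (m + 1)) (Real.exp (-x ^ 2) * (-(1 / (Real.sqrt Real.pi * 2 ^ m * m !)) *
      (hermiteP (m + 1) x * hermiteP m x))) x := by
  rw [funext (rhoG_succ m)]
  have ha := hasDerivAt_hermiteP_succ m x
  have hb := hasDerivAt_hermiteP m x
  have hQ := ((((ha.pow 2).add ((hb.pow 2).const_mul (2 * ((m : ℝ) + 1)))).sub
    ((((hasDerivAt_id x).const_mul (2 : ℝ)).mul ha).mul hb)).div_const 2).const_mul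
      (1 / (Real.sqrt Real.pi * 2 ^ m * m !))
  refine HasDerivAt.congr_deriv ((hasDerivAt_exp_neg_sq x).mul hQ) ?_
  simp only [id, Pi.mul_apply]
  push_cast
  ring

theorem hasDerivAt_deriv_rhoG_succ (m : ℕ) (x : ℝ) :
    HasDerivAt (deriv (rhoG (m + 1))) (Real.exp (-x ^ 2) *
      (1 / (Real.sqrt Real.pi * 2 ^ m * m !) *
        (hermiteP (m + 1) x ^ 2 - 2 * (m + 1) * hermiteP m x ^ 2))) x := by
  rw [funext fun y => (hasDerivAt_rhoG_succ m y).deriv]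
  have hQ := ((hasDerivAt_hermiteP_succ m x).mul (hasDerivAt_hermiteP m x)).const_mul
    (-(1 / (Real.sqrt Real.pi * 2 ^ m * m !)))
  refine HasDerivAt.congr_deriv ((hasDerivAt_exp_neg_sq x).mul hQ) ?_
  ring

/-- The GUE spectral density `σ = ρ_N^G` satisfies the second-order nonlinear ODE
`(σ'')² - 4(xσ' - σ)² + 8N(σ')² = 0`. -/
theorem rhoG_nonlinear_ode (N : ℕ) (hN : 1 ≤ N) (x : ℝ) :
    (iteratedDeriv 2 (rhoG N) x) ^ 2
      - 4 * (x * deriv (rhoG N) x - rhoG N x) ^ 2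
      + 8 * N * (deriv (rhoG N) x) ^ 2 = 0 := by
  obtain ⟨m, rfl⟩ := Nat.exists_eq_add_of_le' hN
  rw [iteratedDeriv_succ, iteratedDeriv_one, (hasDerivAt_deriv_rhoG_succ m x).deriv,
    (hasDerivAt_rhoG_succ m x).deriv, rhoG_succ]
  push_cast
  ring
end

section
/- The Laguerre spectral density times x satisfies a second-order nonlinear differential equation: let a > -1 and N ≥ 1, and let μ(x) = x · ρ_N^L(x), where ρ_N^L(x) = x^a e^{-x} Σ_{n=0}^{N-1} (n!/Γ(a+n+1)) L_n^a(x)². Then for every x > 0, (x μ''(x))² - (μ(x) - x μ'(x) + (a+2N) μ'(x))² + 4N(a+N) (μ'(x))² = 0. -/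
/-!
Write `w = x^a e^{-x}`, `p = L_N^a`, `q = L_{N-1}^a` and `c = N!/Γ(a+N)`. Two first-order relations,
`x p' = N p - (N+a) q` and `x q' = N p - (N+a-x) q`, hold coefficientwise, and together they give the
three-term recurrence. Induction on `N` with this recurrence yields the confluent
Christoffel–Darboux formula (`christoffel_darboux`)
`μ = c w (N p² + (N+a) q² - (a+2N-x) p q)`.
Differentiating it with the first-order relations gives `μ' = c w p q` (`hasDerivAt_muL`) and then
`x μ'' = c w (N p² - (N+a) q²)`. Since `μ - x μ' + (a+2N) μ' = c w (N p² + (N+a) q²)`, the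
differential equation is the identity `(A - B)² - (A + B)² + 4 A B = 0` with
`A = c w N p²` and `B = c w (N+a) q²`.
-/

open Nat

/-- The LUE spectral density `ρ_N^L(x) = x^a e^{-x} Σ_{n<N} (n!/Γ(a+n+1)) L_n^a(x)²`. -/
noncomputable def rhoL (a : ℝ) (N : ℕ) (x : ℝ) : ℝ :=
  x ^ a * Real.exp (-x) *
    ∑ n ∈ Finset.range N, (n ! / Real.Gamma (a + n + 1)) * (laguerreP a n x) ^ 2

/-- The LUE spectral density times `x`: `μ(x) = x ρ_N^L(x)`. -/
noncomputable def muL (a : ℝ) (N : ℕ) (x : ℝ) : ℝ := x * rhoL a N x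

/-- `L_n^a` as an element of `ℝ[X]`. The factor `1/((n-k)! k!)` is written `(n choose k)/n!`, so that
the coefficient formula holds for every `k`, including `k > n`. -/
noncomputable def laguerrePoly (a : ℝ) (n : ℕ) : Polynomial ℝ :=
  ∑ k ∈ Finset.range (n + 1),
    Polynomial.monomial k ((-1 : ℝ) ^ k *
      (Real.Gamma (n + a + 1) / Real.Gamma (k + a + 1) * (n.choose k / n !)))

lemma laguerrePoly_coeff (a : ℝ) (n k : ℕ) :
    (laguerrePoly a n).coeff k = (-1 : ℝ) ^ k *
      (Real.Gamma (n + a + 1) / Real.Gamma (k + a + 1) * (n.choose k / n !)) := by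
  unfold laguerrePoly
  rw [Polynomial.finsetSum_coeff]
  simp only [Polynomial.coeff_monomial]
  rw [Finset.sum_ite_eq' (Finset.range (n + 1)) k]
  split_ifs with h
  · rfl
  · rw [Nat.choose_eq_zero_of_lt (by simpa using h)]; simp

lemma laguerreP_eq_eval (a : ℝ) (n : ℕ) (x : ℝ) :
    laguerreP a n x = (laguerrePoly a n).eval x := by
  unfold laguerreP laguerrePoly
  rw [Polynomial.eval_finsetSum]
  refine Finset.sum_congr rfl fun k hk => ?_
  rw [Polynomial.eval_monomial, Nat.cast_choose ℝ (by simpa [Nat.lt_succ_iff] using hk)]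
  have := Nat.factorial_ne_zero n
  field_simp

lemma gamma_pos_of_nat {a : ℝ} (ha : -1 < a) (k : ℕ) : 0 < Real.Gamma (k + a + 1) :=
  Real.Gamma_pos_of_pos (by have := k.cast_nonneg (α := ℝ); linarith)

lemma gamma_succ_of_nat {a : ℝ} (ha : -1 < a) (k : ℕ) :
    Real.Gamma ((k + 1 : ℕ) + a + 1) = (k + a + 1) * Real.Gamma (k + a + 1) := by
  rw [← Real.Gamma_add_one (by have := k.cast_nonneg (α := ℝ); linarith)]
  push_cast; ring_nf

lemma coeff_X_mul_derivative (p : Polynomial ℝ) (k : ℕ) :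
    (Polynomial.X * Polynomial.derivative p).coeff k = k * p.coeff k := by
  cases k with
  | zero => simp
  | succ k => rw [Polynomial.coeff_X_mul, Polynomial.coeff_derivative]; push_cast; ring

/-- The lowering relation `x L_{n+1}' = (n+1) L_{n+1} - (n+1+a) L_n`. -/
lemma laguerrePoly_lower {a : ℝ} (ha : -1 < a) (n : ℕ) :
    Polynomial.X * Polynomial.derivative (laguerrePoly a (n + 1)) =
      Polynomial.C ((n : ℝ) + 1) * laguerrePoly a (n + 1)
        - Polynomial.C ((n : ℝ) + 1 + a) * laguerrePoly a n := by
  ext k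
  rw [coeff_X_mul_derivative, Polynomial.coeff_sub, Polynomial.coeff_C_mul,
    Polynomial.coeff_C_mul, laguerrePoly_coeff, laguerrePoly_coeff, gamma_succ_of_nat ha]
  have hd := (gamma_pos_of_nat ha k).ne'
  have hf : ((n ! : ℕ) : ℝ) ≠ 0 := by exact_mod_cast Nat.factorial_ne_zero n
  have hn : (n : ℝ) + 1 ≠ 0 := by positivity
  have hc : ((n.choose k : ℕ) : ℝ) * (n + 1) = ((n + 1).choose k : ℕ) * (n + 1 - k) := by
    rcases le_or_gt k (n + 1) with h | h
    · have := Nat.choose_mul_succ_eq n k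
      have h2 := congrArg (Nat.cast : ℕ → ℝ) this
      push_cast [Nat.cast_sub h] at h2
      exact h2
    · rw [Nat.choose_eq_zero_of_lt h, Nat.choose_eq_zero_of_lt (by omega)]; simp
  rw [Nat.factorial_succ]
  push_cast
  field_simp
  linear_combination Real.Gamma (n + a + 1) * (n + 1 + a) * hc

/-- The raising relation `x L_n' = (n+1) L_{n+1} - (n+1+a-x) L_n`. -/
lemma laguerrePoly_raise {a : ℝ} (ha : -1 < a) (n : ℕ) :
    Polynomial.X * Polynomial.derivative (laguerrePoly a n) =
      Polynomial.C ((n : ℝ) + 1) * laguerrePoly a (n + 1)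
        - Polynomial.C ((n : ℝ) + 1 + a) * laguerrePoly a n
        + Polynomial.X * laguerrePoly a n := by
  ext k
  rw [coeff_X_mul_derivative, Polynomial.coeff_add, Polynomial.coeff_sub, Polynomial.coeff_C_mul,
    Polynomial.coeff_C_mul, laguerrePoly_coeff, laguerrePoly_coeff, gamma_succ_of_nat ha]
  have hf : ((n ! : ℕ) : ℝ) ≠ 0 := by exact_mod_cast Nat.factorial_ne_zero n
  have hn : (n : ℝ) + 1 ≠ 0 := by positivity
  rw [Nat.factorial_succ]
  cases k with
  | zero =>
    have hd := (gamma_pos_of_nat ha 0).ne'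
    simp only [Polynomial.mul_coeff_zero, Polynomial.coeff_X_zero, Nat.choose_zero_right]
    push_cast at hd ⊢
    field_simp
    ring
  | succ k =>
    rw [Polynomial.coeff_X_mul, laguerrePoly_coeff, gamma_succ_of_nat ha]
    have hd := (gamma_pos_of_nat ha k).ne'
    have hk : (k : ℝ) + a + 1 ≠ 0 := by
      have := k.cast_nonneg (α := ℝ); linarith
    have hc : ((n.choose (k + 1) : ℕ) : ℝ) * (k + 1) = (n.choose k : ℕ) * (n - k) := by
      rcases le_or_gt k n with h | h
      · have h2 := congrArg (Nat.cast : ℕ → ℝ) (Nat.choose_succ_right_eq n k)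
        push_cast [Nat.cast_sub h] at h2
        exact h2
      · rw [Nat.choose_eq_zero_of_lt h, Nat.choose_eq_zero_of_lt (by omega)]; simp
    rw [Nat.choose_succ_succ' n k, pow_succ]
    push_cast
    field_simp
    linear_combination -Real.Gamma (n + a + 1) * hc

lemma hasDerivAt_laguerreP (a : ℝ) (n : ℕ) (x : ℝ) :
    HasDerivAt (laguerreP a n) ((Polynomial.derivative (laguerrePoly a n)).eval x) x := by
  have : laguerreP a n = fun y => (laguerrePoly a n).eval y := funext (laguerreP_eq_eval a n)
  rw [this]
  exact (laguerrePoly a n).hasDerivAt x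

lemma hasDerivAt_laguerreP_lower {a : ℝ} (ha : -1 < a) (n : ℕ) {x : ℝ} (hx : 0 < x) :
    HasDerivAt (laguerreP a (n + 1))
      (((n + 1) * laguerreP a (n + 1) x - (n + 1 + a) * laguerreP a n x) / x) x := by
  convert hasDerivAt_laguerreP a (n + 1) x using 1
  have h := congrArg (Polynomial.eval x) (laguerrePoly_lower ha n)
  simp only [Polynomial.eval_mul, Polynomial.eval_sub, Polynomial.eval_C, Polynomial.eval_X] at h
  rw [laguerreP_eq_eval, laguerreP_eq_eval, ← h]
  field_simp

lemma hasDerivAt_laguerreP_raise {a : ℝ} (ha : -1 < a) (n : ℕ) {x : ℝ} (hx : 0 < x) :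
    HasDerivAt (laguerreP a n)
      (((n + 1) * laguerreP a (n + 1) x - (n + 1 + a - x) * laguerreP a n x) / x) x := by
  convert hasDerivAt_laguerreP a n x using 1
  have h := congrArg (Polynomial.eval x) (laguerrePoly_raise ha n)
  simp only [Polynomial.eval_mul, Polynomial.eval_sub, Polynomial.eval_add, Polynomial.eval_C,
    Polynomial.eval_X] at h
  rw [laguerreP_eq_eval, laguerreP_eq_eval]
  rw [div_eq_iff hx.ne']
  linear_combination -h

/-- The three-term recurrence, obtained by equating the two expressions for `x L_{n+1}'`. -/
lemma laguerreP_recurrence {a : ℝ} (ha : -1 < a) (n : ℕ) (x : ℝ) :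
    (n + 2) * laguerreP a (n + 2) x =
      (2 * n + 3 + a - x) * laguerreP a (n + 1) x - (n + 1 + a) * laguerreP a n x := by
  have h1 := congrArg (Polynomial.eval x) (laguerrePoly_lower ha n)
  have h2 := congrArg (Polynomial.eval x) (laguerrePoly_raise ha (n + 1))
  simp only [Polynomial.eval_mul, Polynomial.eval_sub, Polynomial.eval_add, Polynomial.eval_C,
    Polynomial.eval_X, ← laguerreP_eq_eval] at h1 h2
  push_cast at h2
  linear_combination h1 - h2

lemma laguerreP_one {a : ℝ} (ha : -1 < a) (x : ℝ) :
    laguerreP a 1 x = (1 + a - x) * laguerreP a 0 x := by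
  have h2 := congrArg (Polynomial.eval x) (laguerrePoly_raise ha 0)
  have h0 : Polynomial.derivative (laguerrePoly a 0) = 0 := by simp [laguerrePoly]
  rw [h0] at h2
  simp only [Polynomial.eval_mul, Polynomial.eval_sub, Polynomial.eval_add, Polynomial.eval_C,
    Polynomial.eval_X, ← laguerreP_eq_eval, Polynomial.eval_zero] at h2
  push_cast at h2
  linear_combination -h2

/-- The confluent Christoffel–Darboux formula for `N = m + 1`, with the derivatives of `L_N` and
`L_{N-1}` already eliminated. -/
lemma christoffel_darboux {a : ℝ} (ha : -1 < a) (m : ℕ) (x : ℝ) :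
    x * ∑ n ∈ Finset.range (m + 1), (n ! / Real.Gamma (a + n + 1)) * (laguerreP a n x) ^ 2 =
      ((m + 1)! / Real.Gamma (m + a + 1)) *
        ((m + 1) * laguerreP a (m + 1) x ^ 2 + (m + 1 + a) * laguerreP a m x ^ 2
          - (a + 2 * (m + 1) - x) * (laguerreP a (m + 1) x * laguerreP a m x)) := by
  induction m with
  | zero =>
    rw [Finset.sum_range_one, zero_add, laguerreP_one ha]
    have := (gamma_pos_of_nat ha 0).ne'
    simp only [Nat.factorial, Nat.cast_zero, zero_add, add_zero] at this ⊢
    push_cast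
    field_simp
    ring
  | succ m ih =>
    rw [Finset.sum_range_succ, mul_add, ih, gamma_succ_of_nat ha]
    have hg : Real.Gamma (a + (m + 1 : ℕ) + 1) = (m + a + 1) * Real.Gamma (m + a + 1) := by
      rw [← gamma_succ_of_nat ha]; ring_nf
    rw [hg, Nat.factorial_succ (m + 1)]
    have hd := (gamma_pos_of_nat ha m).ne'
    have hk : (m : ℝ) + a + 1 ≠ 0 := by
      have := m.cast_nonneg (α := ℝ); linarith
    have hr := laguerreP_recurrence ha m x
    push_cast
    generalize laguerreP a (m + 1 + 1) x = r at *
    generalize laguerreP a (m + 1) x = p at *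
    generalize laguerreP a m x = q at *
    field_simp
    linear_combination (-1 : ℝ) * ((m + 2) * r + ((2 * m + 3 + a - x) * p - (m + 1 + a) * q)
      - (2 * m + 4 + a - x) * p) * hr

/-- The logarithmic derivative of the weight `x^a e^{-x}` is `(a - x)/x`. -/
lemma hasDerivAt_weight (a : ℝ) {x : ℝ} (hx : 0 < x) :
    HasDerivAt (fun y : ℝ => y ^ a * Real.exp (-y)) ((a - x) / x * (x ^ a * Real.exp (-x))) x := by
  have h1 := Real.hasDerivAt_rpow_const (x := x) (p := a) (Or.inl hx.ne')
  have h2 := (hasDerivAt_neg x).exp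
  refine (h1.mul h2).congr_deriv ?_
  rw [Real.rpow_sub_one hx.ne']
  field_simp
  ring

lemma muL_succ {a : ℝ} (ha : -1 < a) (m : ℕ) (x : ℝ) :
    muL a (m + 1) x = (((m + 1)! / Real.Gamma (m + a + 1)) * (x ^ a * Real.exp (-x))) *
        ((m + 1) * laguerreP a (m + 1) x ^ 2 + (m + 1 + a) * laguerreP a m x ^ 2
          - (a + 2 * (m + 1) - x) * (laguerreP a (m + 1) x * laguerreP a m x)) := by
  unfold muL rhoL
  linear_combination (x ^ a * Real.exp (-x)) * christoffel_darboux ha m x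

/-- `μ' = (N!/Γ(a+N)) x^a e^{-x} L_N L_{N-1}` with `N = m + 1`. -/
lemma hasDerivAt_muL {a : ℝ} (ha : -1 < a) (m : ℕ) {x : ℝ} (hx : 0 < x) :
    HasDerivAt (muL a (m + 1)) ((((m + 1)! / Real.Gamma (m + a + 1)) *
      (x ^ a * Real.exp (-x))) * (laguerreP a (m + 1) x * laguerreP a m x)) x := by
  have hp := hasDerivAt_laguerreP_lower ha m hx
  have hq := hasDerivAt_laguerreP_raise ha m hx
  have hw := (hasDerivAt_weight a hx).const_mul ((m + 1)! / Real.Gamma (m + a + 1))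
  have hQ := ((((hp.pow 2).const_mul ((m : ℝ) + 1)).add ((hq.pow 2).const_mul ((m : ℝ) + 1 + a))).sub
    (((hasDerivAt_id x).const_sub (a + 2 * ((m : ℝ) + 1))).mul (hp.mul hq)))
  rw [funext (muL_succ ha m)]
  refine (hw.mul hQ).congr_deriv ?_
  simp only [Pi.add_apply, Pi.mul_apply, Pi.sub_apply, Pi.pow_apply, id]
  generalize ((m + 1)! / Real.Gamma (m + a + 1) : ℝ) = c
  generalize x ^ a * Real.exp (-x) = w
  field_simp
  push_cast
  ring

lemma hasDerivAt_deriv_muL {a : ℝ} (ha : -1 < a) (m : ℕ) {x : ℝ} (hx : 0 < x) :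
    HasDerivAt (deriv (muL a (m + 1))) ((((m + 1)! / Real.Gamma (m + a + 1)) *
      (x ^ a * Real.exp (-x))) *
        ((m + 1) * laguerreP a (m + 1) x ^ 2 - (m + 1 + a) * laguerreP a m x ^ 2) / x) x := by
  have hp := hasDerivAt_laguerreP_lower ha m hx
  have hq := hasDerivAt_laguerreP_raise ha m hx
  have hw := (hasDerivAt_weight a hx).const_mul ((m + 1)! / Real.Gamma (m + a + 1))
  have he : deriv (muL a (m + 1)) =ᶠ[nhds x] fun y => (((m + 1)! / Real.Gamma (m + a + 1)) *
      (y ^ a * Real.exp (-y))) * (laguerreP a (m + 1) y * laguerreP a m y) := by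
    filter_upwards [lt_mem_nhds hx] with y hy using (hasDerivAt_muL ha m hy).deriv
  refine HasDerivAt.congr_of_eventuallyEq ?_ he
  refine (hw.mul (hp.mul hq)).congr_deriv ?_
  simp only [Pi.mul_apply]
  generalize ((m + 1)! / Real.Gamma (m + a + 1) : ℝ) = c
  generalize x ^ a * Real.exp (-x) = w
  field_simp
  ring

/-- `μ = x ρ_N^L` satisfies the second-order nonlinear ODE
`(xμ'')² - (μ - xμ' + (a+2N)μ')² + 4N(a+N)(μ')² = 0` on `(0,∞)`. -/
theorem muL_nonlinear_ode (a : ℝ) (ha : -1 < a) (N : ℕ) (hN : 1 ≤ N)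
    (x : ℝ) (hx : 0 < x) :
    (x * iteratedDeriv 2 (muL a N) x) ^ 2
      - (muL a N x - x * deriv (muL a N) x + (a + 2 * N) * deriv (muL a N) x) ^ 2
      + 4 * N * (a + N) * (deriv (muL a N) x) ^ 2 = 0 := by
  obtain ⟨m, rfl⟩ := Nat.exists_eq_add_of_le' hN
  rw [iteratedDeriv_succ, iteratedDeriv_one, (hasDerivAt_deriv_muL ha m hx).deriv,
    (hasDerivAt_muL ha m hx).deriv, muL_succ ha m x, mul_div_cancel₀ _ hx.ne']
  push_cast
  ring
end

section
/- Contour integral representation of Laguerre polynomials: let N and a be natural numbers, let y be a complex number, and let 0 < r. Then (1/(2πi)) ∮_{|z|=r} e^{-yz} (z+2)^{N+a} z^{-(N+1)} dz = 2^a L_N^a(2y), where the integral is taken over the positively oriented circle of radius r centred at the origin. Equivalently, the coefficient of z^N in the entire function z ↦ e^{-yz} (z+2)^{N+a} equals 2^a L_N^a(2y). -/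
/-!
By the Leibniz rule, the `N`-th Taylor coefficient at `0` of `e^{-yz} (z+2)^{N+a}` is
`Σ_k ((-y)^k / k!) · C(N+a, N-k) · 2^{a+k}`, which is `2^a L_N^a(2y)` term by term. Cauchy's integral
formula for derivatives turns the contour integral into the same coefficient.
-/

open Nat

/-- The generalized Laguerre polynomial with natural-number parameter `a`,
`L_n^a(x) = Σ_{k=0}^{n} (-1)^k ((n+a)!/((k+a)! (n-k)! k!)) x^k`, evaluated at a complex
argument. -/
noncomputable def laguerreC (a n : ℕ) (x : ℂ) : ℂ :=
  ∑ k ∈ Finset.range (n + 1),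
    (-1 : ℂ) ^ k *
      (((n + a)! : ℂ) / (((k + a)! : ℂ) * ((n - k)! : ℂ) * (k ! : ℂ))) * x ^ k

theorem taylorCoeff_exp_mul_add_two_pow (N a : ℕ) (y : ℂ) :
    iteratedDeriv N (fun z : ℂ => Complex.exp (-y * z) * (z + 2) ^ (N + a)) 0 / (N ! : ℂ)
      = 2 ^ a * laguerreC a N (2 * y) := by
  have hpow (j : ℕ) : iteratedDeriv j (fun z : ℂ => (z + 2) ^ (N + a)) 0
      = (N + a).descFactorial j * 2 ^ (N + a - j) := by
    have h := congrFun (iteratedDeriv_comp_add_const j (fun z : ℂ => z ^ (N + a)) 2) 0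
    simpa using h
  rw [iteratedDeriv_fun_mul (by fun_prop) (by fun_prop), laguerreC, Finset.sum_div,
    Finset.mul_sum]
  refine Finset.sum_congr rfl fun k hk => ?_
  -- With `N = k + m`, every truncated subtraction becomes an honest one.
  obtain ⟨m, rfl⟩ := Nat.exists_eq_add_of_le (Nat.lt_succ_iff.mp (Finset.mem_range.mp hk))
  have hd : ((k + a)! : ℂ) * ((k + m + a).descFactorial m : ℂ) = ((k + m + a)! : ℂ) := by
    have h := Nat.factorial_mul_descFactorial (n := k + m + a) (k := m) (by omega)
    rw [show k + m + a - m = k + a by omega] at h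
    exact_mod_cast h
  rw [iteratedDeriv_cexp_const_mul, hpow, Nat.cast_choose ℂ (Nat.le_add_right k m),
    Nat.add_sub_cancel_left, show k + m + a - m = k + a by omega, ← hd]
  have h0 (n : ℕ) : (n ! : ℂ) ≠ 0 := Nat.cast_ne_zero.mpr (Nat.factorial_ne_zero n)
  have h1 := h0 k
  have h2 := h0 m
  have h3 := h0 (k + m)
  have h4 := h0 (k + a)
  simp only [mul_zero, Complex.exp_zero, mul_one, neg_pow y k, mul_pow, pow_add]
  field_simp

/-- Contour integral representation of the Laguerre polynomials:
`(1/(2πi)) ∮_{|z|=r} e^{-yz} (z+2)^{N+a} z^{-(N+1)} dz = 2^a L_N^a(2y)`; equivalently the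
`N`-th Taylor coefficient at `0` of the entire function `z ↦ e^{-yz}(z+2)^{N+a}` equals
`2^a L_N^a(2y)`. -/
theorem laguerre_contour_integral (N a : ℕ) (y : ℂ) (r : ℝ) (hr : 0 < r) :
    ((1 / (2 * (Real.pi : ℂ) * Complex.I)) *
        (∮ z in C(0, r), Complex.exp (-y * z) * (z + 2) ^ (N + a) * z ^ (-(N + 1 : ℤ)))
      = 2 ^ a * laguerreC a N (2 * y)) ∧
    (iteratedDeriv N (fun z : ℂ => Complex.exp (-y * z) * (z + 2) ^ (N + a)) 0 / (N ! : ℂ)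
      = 2 ^ a * laguerreC a N (2 * y)) := by
  refine ⟨?_, taylorCoeff_exp_mul_add_two_pow N a y⟩
  have hf : Differentiable ℂ (fun z : ℂ => Complex.exp (-y * z) * (z + 2) ^ (N + a)) := by
    fun_prop
  have hC := hf.differentiableOn.circleIntegral_one_div_sub_center_pow_smul (c := 0) hr N
  rw [← taylorCoeff_exp_mul_add_two_pow]
  have hint : (∮ z in C(0, r), Complex.exp (-y * z) * (z + 2) ^ (N + a) * z ^ (-(N + 1 : ℤ)))
      = ∮ z in C(0, r), (1 / (z - 0) ^ (N + 1)) •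
          (Complex.exp (-y * z) * (z + 2) ^ (N + a)) := by
    congr 1
    funext z
    rw [zpow_neg, sub_zero, smul_eq_mul, one_div, mul_comm]
    norm_cast
  rw [hint, hC, smul_eq_mul]
  have hpi := Complex.two_pi_I_ne_zero
  field_simp
end
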